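/- arXiv:2303.14503 — 2 statements merged into one kernel-verified Lean document; each statement's English description precedes it below -/
import Mathlib

section
/- For any piecewise linear almost embedding g : K5−(4,5) → ℝ² one has l(g) := w(g|_{K3}, g(4)) − w(g|_{K3}, g(5)) = ±1. -/
/-!
Write `A`, `B` for the images of the two non-adjacent vertices. The coordinate
`z ↦ log ((z - A) / (z - B))` unrolls the plane minus `A` and `B` so that moving towards `A` or `B`
means going to real part `-∞` or `+∞`, with deck group generated by `2πi`. The triangle lifts to a
path `ε` whose endpoints differ by `2πi L`, where `L` is the
difference of the winding numbers (`planar_version`). For each triangle vertex `i`, the edges from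
`i` to `A` and to `B`, cut shortly before they first reach `A` and `B` (`exists_truncation`), lift
to a path `γ i` on `[-1, 1]` running from far left to far right through the lift of the vertex.
Almost embeddedness says that the negative half of `γ i` avoids every translate of the positive
half of `γ j` for `i ≠ j`, and that each lifted edge of the triangle avoids every translate of the
path at the opposite vertex.

These paths are compared by the relation `RightOf σ q`, that `q` lies to the right of `σ`. It does
not change when `q` moves without meeting `σ` (`rightOf_iff_of_path`). For two half-separated
paths exactly one is to the right of the other (`HalfSep.rightOf_antisymm`), and there is no
cyclic triple (`not_cyclic`): such a triple would give a nowhere zero function on a star-shaped set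
whose argument increases by `2π` along a closed hexagonal path.

Let `F n` mean that the `n`-th translate of vertex `1` lies to the right of `γ 0`. The edges of the
triangle express all comparisons between translates of the `γ i` through `F` and `L`
(`cylinder_degree`). Antisymmetry becomes `F n ↔ ¬ F (-n - L)`; the absence of cyclic triples says
that both `F` and its complement are closed under addition; and far translates satisfy
`¬ F n` for `n` large and `F n` for `-n` large. Hence `F n` holds for all `n < 0` and fails for all
`n > 0`, which leaves only `L = ±1` (`int_cocycle`).
-/

open Set

noncomputable section

/-- The vertex `i` of `K₅` (vertices are 0-indexed: index `i` is vertex `i+1`),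
realized as a point of `ℝ⁵`. -/
def vert (i : Fin 5) : Fin 5 → ℝ := Pi.single i 1

/-- The edge between vertices `i` and `j`, realized as a segment in `ℝ⁵`. -/
def seg (i j : Fin 5) : Set (Fin 5 → ℝ) := segment ℝ (vert i) (vert j)

/-- `(i, j)` is an edge of `K₅ − (4,5)`: the edge between vertices `4` and `5`
(indices `3` and `4`) is deleted. -/
def IsEdge (i j : Fin 5) : Prop := i ≠ j ∧ ({i, j} : Set (Fin 5)) ≠ {3, 4}

/-- The graph `K₅ − (4,5)`, realized as a 1-dimensional simplicial complex in `ℝ⁵`. -/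
def K5m45 : Set (Fin 5 → ℝ) := ⋃ (i) (j) (_ : IsEdge i j), seg i j

/-- `g` is a continuous almost embedding of `K₅ − (4,5)` in the plane `ℝ² = ℂ`:
it is continuous on the complex, and the images of any two disjoint
(non-adjacent) edges are disjoint. -/
def AlmostEmb (g : (Fin 5 → ℝ) → ℂ) : Prop :=
  ContinuousOn g K5m45 ∧
  ∀ i j k l : Fin 5, IsEdge i j → IsEdge k l →
    ({i, j} : Set (Fin 5)) ∩ ({k, l} : Set (Fin 5)) = ∅ →
    Disjoint (g '' seg i j) (g '' seg k l)

/-- The closed curve traversing the cycle `K₃` on vertices `1, 2, 3`, oriented by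
the cyclic permutation `(1 2 3)`. -/
def triLoop (t : ℝ) : Fin 5 → ℝ :=
  if t ≤ 1/3 then (1 - 3*t) • vert 0 + (3*t) • vert 1
  else if t ≤ 2/3 then (2 - 3*t) • vert 1 + (3*t - 1) • vert 2
  else (3 - 3*t) • vert 2 + (3*t - 2) • vert 0

/-- `n` is the winding number around `A` of the closed curve `γ` (a loop
parametrized by `[0,1]`): a continuous logarithm of `γ - A` gains `2πin`
along the loop. -/
def IsWindingNumber (γ : ℝ → ℂ) (A : ℂ) (n : ℤ) : Prop :=
  ∃ h : ℝ → ℂ, ContinuousOn h (Icc 0 1) ∧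
    (∀ t ∈ Icc (0:ℝ) 1, γ t = A + Complex.exp (h t)) ∧
    h 1 - h 0 = 2 * (Real.pi : ℂ) * Complex.I * (n : ℂ)

/-- `f : [0,1] → ℂ` is affine on `[a, b]`. -/
def AffOn (f : ℝ → ℂ) (a b : ℝ) : Prop := ∃ c d : ℂ, ∀ t ∈ Icc a b, f t = c + t * d

/-- `f : [0,1] → ℂ` is piecewise linear: there is a subdivision
`0 = s 0 < s 1 < ⋯ < s n = 1` of `[0,1]` such that `f` is affine on each part. -/
def PLOn (f : ℝ → ℂ) : Prop :=
  ∃ n : ℕ, ∃ s : Fin (n+1) → ℝ, StrictMono s ∧ s 0 = 0 ∧ s (Fin.last n) = 1 ∧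
    ∀ k : Fin n, AffOn f (s k.castSucc) (s k.succ)

/-- `g` is piecewise linear on `K₅ − (4,5)`: on every edge of the graph
(affinely parametrized by `[0,1]`), `g` is piecewise linear, i.e. linear on
each edge of some subdivision of the graph. -/
def IsPL (g : (Fin 5 → ℝ) → ℂ) : Prop :=
  ∀ i j, IsEdge i j → PLOn (fun t => g ((1-t) • vert i + t • vert j))

/-! ### Continuous logarithms -/

/-- A nowhere zero continuous function on a compact star-shaped set has a continuous
logarithm. By uniform continuity the ratios `F (p (k + 1) x) / F (p k x)` along a fine subdivision of
the segment from `x₀` to `x` stay in the slit plane, so the principal logarithms can be summed. -/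
theorem exists_log {E : Type*} [NormedAddCommGroup E] [NormedSpace ℝ E] {D : Set E} {x₀ : E}
    (hD : IsCompact D) (hstar : StarConvex ℝ x₀ D) (hx₀ : x₀ ∈ D) {F : E → ℂ}
    (hF : ContinuousOn F D) (hne : ∀ x ∈ D, F x ≠ 0) :
    ∃ H : E → ℂ, ContinuousOn H D ∧ ∀ x ∈ D, Complex.exp (H x) = F x := by
  -- a positive lower bound for `‖F‖` and uniform continuity
  obtain ⟨m, hm, hmF⟩ : ∃ m > 0, ∀ x ∈ D, m ≤ ‖F x‖ := by
    obtain ⟨y, hy, hmin⟩ := hD.exists_isMinOn ⟨x₀, hx₀⟩ hF.norm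
    exact ⟨‖F y‖, norm_pos_iff.2 (hne y hy), fun x hx => hmin hx⟩
  have huc := hD.uniformContinuousOn_of_continuous hF
  obtain ⟨δ, hδ, hFδ⟩ := Metric.uniformContinuousOn_iff.1 huc m hm
  obtain ⟨R, hR⟩ := hD.isBounded.exists_norm_le
  obtain ⟨N, hN⟩ := exists_nat_gt ((2 * R + 1) / δ)
  have hR0 : 0 ≤ R := (norm_nonneg _).trans (hR x₀ hx₀)
  have hNpos : (0 : ℝ) < N := lt_trans (by positivity) hN
  set p : ℕ → E → E := fun k x => x₀ + ((k : ℝ) / N) • (x - x₀) with hp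
  have hpD : ∀ k ≤ N, ∀ x ∈ D, p k x ∈ D := by
    intro k hk x hx
    refine hstar.add_smul_sub_mem hx (by positivity) ?_
    rw [div_le_one hNpos]; exact_mod_cast hk
  have hpc : ∀ k, Continuous (p k) := fun k => by fun_prop
  have hclose : ∀ k < N, ∀ x ∈ D, ‖F (p (k + 1) x) / F (p k x) - 1‖ < 1 := by
    intro k hk x hx
    have h1 := hpD k hk.le x hx
    have h2 := hpD (k + 1) hk x hx
    have h3 : dist (p (k + 1) x) (p k x) < δ := by
      have : p (k + 1) x - p k x = (1 / (N : ℝ)) • (x - x₀) := by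
        simp only [hp, add_sub_add_left_eq_sub, ← sub_smul]
        congr 1; push_cast; ring
      rw [dist_eq_norm, this, norm_smul, Real.norm_of_nonneg (by positivity)]
      have h4 : ‖x - x₀‖ ≤ 2 * R := (norm_sub_le _ _).trans (by linarith [hR x hx, hR x₀ hx₀])
      rw [div_lt_iff₀ hδ] at hN
      rw [one_div, inv_mul_lt_iff₀ hNpos]
      linarith
    have h4 := hFδ _ h2 _ h1 h3
    rw [dist_eq_norm] at h4
    have h5 := hmF _ h1
    have h6 := hne _ h1
    rw [div_sub_one h6, norm_div, div_lt_one (norm_pos_iff.2 h6)]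
    linarith
  have hslit : ∀ k < N, ∀ x ∈ D, F (p (k + 1) x) / F (p k x) ∈ Complex.slitPlane := by
    intro k hk x hx
    have := Complex.mem_slitPlane_of_norm_lt_one (hclose k hk x hx)
    simpa using this
  refine ⟨fun x => Complex.log (F x₀) +
    ∑ k ∈ Finset.range N, Complex.log (F (p (k + 1) x) / F (p k x)), ?_, ?_⟩
  · refine continuousOn_const.add (continuousOn_finsetSum _ fun k hk => ?_)
    have hk := Finset.mem_range.1 hk
    refine ContinuousOn.clog (ContinuousOn.div ?_ ?_ ?_) (fun x hx => hslit k hk x hx)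
    · exact hF.comp (hpc _).continuousOn fun x hx => hpD _ hk x hx
    · exact hF.comp (hpc _).continuousOn fun x hx => hpD _ hk.le x hx
    · exact fun x hx => hne _ (hpD _ hk.le x hx)
  · intro x hx
    have key : ∀ n ≤ N, Complex.exp (Complex.log (F x₀) +
        ∑ k ∈ Finset.range n, Complex.log (F (p (k + 1) x) / F (p k x))) = F (p n x) := by
      intro n
      induction n with
      | zero => intro _; simp [hp, Complex.exp_log (hne _ hx₀)]
      | succ n ih =>
        intro hn
        have hn' : n < N := hn
        rw [Finset.sum_range_succ, ← add_assoc, Complex.exp_add, ih hn'.le,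
          Complex.exp_log (Complex.slitPlane_ne_zero (hslit n hn' x hx))]
        exact mul_div_cancel₀ _ (hne _ (hpD n hn'.le x hx))
    have : p N x = x := by simp [hp, div_self hNpos.ne']
    rw [key N le_rfl, this]

/-- A continuous angle on a connected set that stays within a right angle of the direction `ψ`
modulo `2π` stays near a single determination of `ψ`. -/
theorem exists_band {E : Type*} [TopologicalSpace E] {S : Set E} (hS : IsPreconnected S)
    {f : E → ℝ} (hf : ContinuousOn f S) {ψ : ℝ} (hcos : ∀ x ∈ S, 0 < Real.cos (f x - ψ)) :
    ∃ k : ℤ, ∀ x ∈ S, |f x - ψ - 2 * Real.pi * k| < Real.pi / 2 := by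
  have hpi := Real.pi_pos
  rcases S.eq_empty_or_nonempty with rfl | ⟨x₀, hx₀⟩
  · exact ⟨0, by simp⟩
  have hc : ∀ (k : ℤ), ∀ x ∈ S, 0 < Real.cos (f x - ψ - 2 * Real.pi * k) := by
    intro k x hx
    have := hcos x hx
    rwa [mul_comm (2 * Real.pi), Real.cos_sub_int_mul_two_pi]
  -- the determination nearest to the angle at `x₀`
  set k : ℤ := round ((f x₀ - ψ) / (2 * Real.pi)) with hk
  set G : E → ℝ := fun x => f x - ψ - 2 * Real.pi * k with hG
  have hGc : ContinuousOn G S := by fun_prop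
  have h0 : |G x₀| ≤ Real.pi := by
    have h1 := abs_sub_round ((f x₀ - ψ) / (2 * Real.pi))
    have h2 : G x₀ = ((f x₀ - ψ) / (2 * Real.pi) - k) * (2 * Real.pi) := by
      simp only [hG]; field_simp
    rw [h2, abs_mul, abs_of_pos (by positivity : 0 < 2 * Real.pi)]
    nlinarith
  have h1 : |G x₀| < Real.pi / 2 := by
    by_contra h
    have h2 := Real.cos_nonpos_of_pi_div_two_le_of_le (not_lt.1 h) (by linarith)
    rw [Real.cos_abs] at h2
    exact absurd (hc k x₀ hx₀) (not_lt.2 h2)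
  refine ⟨k, fun x hx => ?_⟩
  by_contra h
  have hi : IsPreconnected ((fun x => |G x|) '' S) := hS.image _ hGc.abs
  obtain ⟨y, hy, hy'⟩ := hi.Icc_subset ⟨x₀, hx₀, rfl⟩ ⟨x, hx, rfl⟩ ⟨h1.le, not_lt.1 h⟩
  have h3 := hc k y hy
  have h4 : |G y| = Real.pi / 2 := hy'
  rw [← Real.cos_abs] at h3
  change 0 < Real.cos |G y| at h3
  rw [h4, Real.cos_pi_div_two] at h3
  exact lt_irrefl _ h3

/-- The form in which `exists_band` is used: `H` is a logarithm of `F`, and `F` has positive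
scalar product with the unit vector at angle `ψ`. -/
theorem band_of_log {E : Type*} [TopologicalSpace E] {S : Set E} (hS : IsPreconnected S)
    {H F : E → ℂ} (hH : ContinuousOn H S) (hexp : ∀ x ∈ S, Complex.exp (H x) = F x) (ψ : ℝ)
    (hpos : ∀ x ∈ S, 0 < (F x).re * Real.cos ψ + (F x).im * Real.sin ψ) :
    ∃ k : ℤ, ∀ x ∈ S, |(H x).im - ψ - 2 * Real.pi * k| < Real.pi / 2 := by
  refine exists_band hS (Complex.continuous_im.comp_continuousOn hH) fun x hx => ?_
  have h := hpos x hx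
  rw [← hexp x hx, Complex.exp_re, Complex.exp_im] at h
  have h2 : 0 < Real.exp (H x).re * Real.cos ((H x).im - ψ) := by
    rw [Real.cos_sub]; linarith
  exact (pos_iff_pos_of_mul_pos h2).1 (Real.exp_pos _)

/-! ### Points to the right of a path -/

/-- The point `q` lies to the right of the path `σ : [-1, 1] → ℂ`: a continuous argument of
`q - σ r` decreases from `r = -1` to `r = 1`. This is used when `Re σ (-1) < Re q < Re σ 1`, where the
argument starts near a multiple of `2π` and ends near an odd multiple of `π`. -/
def RightOf (σ : ℝ → ℂ) (q : ℂ) : Prop :=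
  ∃ h : ℝ → ℂ, ContinuousOn h (Icc (-1) 1) ∧
    (∀ r ∈ Icc (-1 : ℝ) 1, Complex.exp (h r) = q - σ r) ∧ (h 1).im < (h (-1)).im

/-- `RightOf` can be tested on any continuous logarithm of `q - σ`, because two of them differ by
a constant. -/
theorem rightOf_iff_of_log {σ : ℝ → ℂ} {q : ℂ} {h : ℝ → ℂ} (hh : ContinuousOn h (Icc (-1) 1))
    (hexp : ∀ r ∈ Icc (-1 : ℝ) 1, Complex.exp (h r) = q - σ r) :
    RightOf σ q ↔ (h 1).im < (h (-1)).im := by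
  refine ⟨?_, fun H => ⟨h, hh, hexp, H⟩⟩
  rintro ⟨h', hh', hexp', hlt⟩
  have hone : ∀ r ∈ Icc (-1 : ℝ) 1, Complex.exp (h' r - h r) = 1 := by
    intro r hr
    rw [Complex.exp_sub, hexp r hr, hexp' r hr, div_self]
    rw [← hexp r hr]; exact Complex.exp_ne_zero _
  obtain ⟨k, hk⟩ := band_of_log isPreconnected_Icc (hh'.sub hh) hone 0
    (fun x _ => by simp)
  have hpi := Real.pi_pos
  have key : ∀ r ∈ Icc (-1 : ℝ) 1, (h' r).im - (h r).im = 2 * Real.pi * k := by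
    intro r hr
    obtain ⟨n, hn⟩ := Complex.exp_eq_one_iff.1 (hone r hr)
    have h1 : (h' r).im - (h r).im = 2 * Real.pi * n := by
      have := congrArg Complex.im hn
      simp at this
      linarith
    have h2 := hk r hr
    simp only [Pi.sub_apply, Complex.sub_im, h1, sub_zero] at h2
    rw [← mul_sub, abs_mul, abs_of_pos (by positivity : 0 < 2 * Real.pi)] at h2
    have h3 : |((n - k : ℤ) : ℝ)| < 1 := by push_cast; nlinarith
    have h4 : n - k = 0 := Int.abs_lt_one_iff.1 (by exact_mod_cast h3)
    rw [h1, show n = k by omega]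
  have e1 := key 1 (by norm_num)
  have e2 := key (-1) (by norm_num)
  linarith

/-- Compares an angle `x` near `2πu` with an angle `y` near `π + 2πv`. -/
theorem band_lt {x y : ℝ} {u v : ℤ} (hx : |x - 0 - 2 * Real.pi * u| < Real.pi / 2)
    (hy : |y - Real.pi - 2 * Real.pi * v| < Real.pi / 2) :
    (v < u → y < x) ∧ (u ≤ v → x < y) := by
  have hpi := Real.pi_pos
  rw [abs_lt] at hx hy
  constructor
  · intro h
    have : (v : ℝ) + 1 ≤ u := by exact_mod_cast h
    nlinarith
  · intro h
    have : (u : ℝ) ≤ v := by exact_mod_cast h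
    nlinarith

theorem band_lt_iff {x y : ℝ} {u v : ℤ} (hx : |x - 0 - 2 * Real.pi * u| < Real.pi / 2)
    (hy : |y - Real.pi - 2 * Real.pi * v| < Real.pi / 2) : y < x ↔ v < u := by
  have := band_lt hx hy
  refine ⟨fun h => ?_, this.1⟩
  by_contra h'
  exact lt_asymm h (this.2 (not_lt.1 h'))

theorem band_gt_iff {x y : ℝ} {u v : ℤ} (hx : |x - 0 - 2 * Real.pi * u| < Real.pi / 2)
    (hy : |y - Real.pi - 2 * Real.pi * v| < Real.pi / 2) : x < y ↔ u ≤ v := by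
  have := band_lt hx hy
  refine ⟨fun h => ?_, this.2⟩
  by_contra h'
  exact lt_asymm h (this.1 (not_le.1 h'))

/-- `RightOf σ` does not change along a path that avoids `σ` and keeps its real part between those
of the endpoints of `σ`. -/
theorem rightOf_iff_of_path {σ ε : ℝ → ℂ} {t₁ t₂ : ℝ} (ht : t₁ ≤ t₂)
    (hσ : ContinuousOn σ (Icc (-1) 1)) (hε : ContinuousOn ε (Icc t₁ t₂))
    (hne : ∀ t ∈ Icc t₁ t₂, ∀ r ∈ Icc (-1 : ℝ) 1, ε t ≠ σ r)
    (hlo : ∀ t ∈ Icc t₁ t₂, (σ (-1)).re < (ε t).re)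
    (hhi : ∀ t ∈ Icc t₁ t₂, (ε t).re < (σ 1).re) :
    RightOf σ (ε t₁) ↔ RightOf σ (ε t₂) := by
  have m1 : (1 : ℝ) ∈ Icc (-1 : ℝ) 1 := by norm_num
  have m2 : (-1 : ℝ) ∈ Icc (-1 : ℝ) 1 := by norm_num
  set D : Set (ℝ × ℝ) := Icc (-1 : ℝ) 1 ×ˢ Icc t₁ t₂ with hD
  have hmem : ((-1 : ℝ), t₁) ∈ D := ⟨m2, left_mem_Icc.2 ht⟩
  have hF : ContinuousOn (fun p : ℝ × ℝ => ε p.2 - σ p.1) D :=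
    (hε.comp continuousOn_snd fun p hp => hp.2).sub
      (hσ.comp continuousOn_fst fun p hp => hp.1)
  obtain ⟨H, hH, hexp⟩ := exists_log (isCompact_Icc.prod isCompact_Icc)
    (((convex_Icc (-1 : ℝ) 1).prod (convex_Icc t₁ t₂)).starConvex hmem) hmem hF
    (fun p hp => sub_ne_zero.2 (hne _ hp.2 _ hp.1))
  have hpre : ∀ r ∈ Icc (-1 : ℝ) 1, ContinuousOn (fun t => H (r, t)) (Icc t₁ t₂) :=
    fun r hr => hH.comp (by fun_prop) fun t ht => ⟨hr, ht⟩
  obtain ⟨u, hu⟩ := band_of_log isPreconnected_Icc (hpre (-1) m2)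
    (F := fun t => ε t - σ (-1)) (fun t ht => hexp (-1, t) ⟨m2, ht⟩) 0
    (fun t ht => by simpa using hlo t ht)
  obtain ⟨v, hv⟩ := band_of_log isPreconnected_Icc (hpre 1 m1)
    (F := fun t => ε t - σ 1) (fun t ht => hexp (1, t) ⟨m1, ht⟩) Real.pi
    (fun t ht => by simpa using hhi t ht)
  have key : ∀ t ∈ Icc t₁ t₂, (RightOf σ (ε t) ↔ v < u) := by
    intro t ht
    rw [rightOf_iff_of_log (h := fun r => H (r, t))
      (hH.comp (by fun_prop) fun r hr => ⟨hr, ht⟩) (fun r hr => hexp (r, t) ⟨hr, ht⟩)]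
    exact band_lt_iff (hu t ht) (hv t ht)
  rw [key _ (left_mem_Icc.2 ht), key _ (right_mem_Icc.2 ht)]

/-! ### Half-separated pairs of paths -/

/-- The negative half of each of the paths `σ`, `τ : [-1, 1] → ℂ` avoids the positive half of the
other. Moreover each starting point lies to the left of the positive half of the other path, and each
endpoint to the right of the negative half of the other path. -/
structure HalfSep (σ τ : ℝ → ℂ) : Prop where
  contL : ContinuousOn σ (Icc (-1) 1)
  contR : ContinuousOn τ (Icc (-1) 1)
  neLR : ∀ r ∈ Icc (-1 : ℝ) 0, ∀ s ∈ Icc (0 : ℝ) 1, σ r ≠ τ s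
  neRL : ∀ r ∈ Icc (-1 : ℝ) 0, ∀ s ∈ Icc (0 : ℝ) 1, τ r ≠ σ s
  botL : ∀ s ∈ Icc (0 : ℝ) 1, (σ (-1)).re < (τ s).re
  topL : ∀ r ∈ Icc (-1 : ℝ) 0, (τ r).re < (σ 1).re
  botR : ∀ s ∈ Icc (0 : ℝ) 1, (τ (-1)).re < (σ s).re
  topR : ∀ r ∈ Icc (-1 : ℝ) 0, (σ r).re < (τ 1).re

theorem HalfSep.symm {σ τ : ℝ → ℂ} (h : HalfSep σ τ) : HalfSep τ σ :=
  ⟨h.contR, h.contL, h.neRL, h.neLR, h.botR, h.topR, h.botL, h.topL⟩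

/-- The pairs of parameters in `[-1, 1]²` of weakly opposite sign: two half-separated paths never
meet at such a pair. -/
def pairDom : Set (ℝ × ℝ) := {p | p.1 ∈ Icc (-1 : ℝ) 1 ∧ p.2 ∈ Icc (-1 : ℝ) 1 ∧ p.1 * p.2 ≤ 0}

theorem isCompact_pairDom : IsCompact pairDom := by
  refine (isCompact_Icc.prod isCompact_Icc : IsCompact (Icc (-1 : ℝ) 1 ×ˢ Icc (-1 : ℝ) 1)
    ).of_isClosed_subset ?_ fun p hp => ⟨hp.1, hp.2.1⟩
  refine (isClosed_Icc.preimage continuous_fst).inter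
    ((isClosed_Icc.preimage continuous_snd).inter ?_)
  exact isClosed_le (continuous_fst.mul continuous_snd) continuous_const

theorem smul_mem_Icc {a x : ℝ} (ha : 0 ≤ a) (ha' : a ≤ 1) (hx : x ∈ Icc (-1 : ℝ) 1) :
    a * x ∈ Icc (-1 : ℝ) 1 :=
  ⟨by nlinarith [hx.1, hx.2], by nlinarith [hx.1, hx.2]⟩

theorem starConvex_pairDom : StarConvex ℝ 0 pairDom := by
  rw [starConvex_zero_iff]
  intro p hp a ha ha'
  refine ⟨smul_mem_Icc ha ha' hp.1, smul_mem_Icc ha ha' hp.2.1, ?_⟩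
  have h := mul_nonneg ha ha
  have h2 := hp.2.2
  simp only [Prod.smul_fst, Prod.smul_snd, smul_eq_mul]
  nlinarith

theorem mem_pairDom_of_neg_pos {r s : ℝ} (hr : r ∈ Icc (-1 : ℝ) 0) (hs : s ∈ Icc (0 : ℝ) 1) :
    (r, s) ∈ pairDom :=
  ⟨⟨hr.1, hr.2.trans zero_le_one⟩, ⟨by linarith [hs.1], hs.2⟩,
    mul_nonpos_of_nonpos_of_nonneg hr.2 hs.1⟩

theorem mem_pairDom_of_pos_neg {r s : ℝ} (hr : r ∈ Icc (0 : ℝ) 1) (hs : s ∈ Icc (-1 : ℝ) 0) :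
    (r, s) ∈ pairDom :=
  ⟨⟨by linarith [hr.1], hr.2⟩, ⟨hs.1, hs.2.trans zero_le_one⟩,
    mul_nonpos_of_nonneg_of_nonpos hr.1 hs.2⟩

theorem pairDom_cases {p : ℝ × ℝ} (hp : p ∈ pairDom) :
    (p.1 ∈ Icc (-1 : ℝ) 0 ∧ p.2 ∈ Icc (0 : ℝ) 1) ∨
      (p.1 ∈ Icc (0 : ℝ) 1 ∧ p.2 ∈ Icc (-1 : ℝ) 0) := by
  obtain ⟨h1, h2, h3⟩ := hp
  rcases mul_nonpos_iff.1 h3 with h | h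
  · exact Or.inr ⟨⟨h.1, h1.2⟩, ⟨h2.1, h.2⟩⟩
  · exact Or.inl ⟨⟨h1.1, h.1⟩, ⟨h.2, h2.2⟩⟩

theorem isPreconnected_corner {a b a₁ a₂ b₁ b₂ : ℝ} (ha : a ∈ Icc a₁ a₂) (hb : b ∈ Icc b₁ b₂) :
    IsPreconnected (({a} : Set ℝ) ×ˢ Icc b₁ b₂ ∪ Icc a₁ a₂ ×ˢ ({b} : Set ℝ)) :=
  IsPreconnected.union (a, b) ⟨rfl, hb⟩ ⟨ha, rfl⟩
    (isPreconnected_singleton.prod isPreconnected_Icc)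
    (isPreconnected_Icc.prod isPreconnected_singleton)

/-- A continuous logarithm of `τ s - σ r` on `pairDom`. Its imaginary part is near a multiple of
`2π` where `σ` is at its start or `τ` at its end, and near an odd multiple of `π` where `σ` is at its
end or `τ` at its start. -/
theorem HalfSep.exists_arg {σ τ : ℝ → ℂ} (h : HalfSep σ τ) :
    ∃ a : ℝ × ℝ → ℂ, ContinuousOn a pairDom ∧
      (∀ p ∈ pairDom, Complex.exp (a p) = τ p.2 - σ p.1) ∧ ∃ u v : ℤ,
      (∀ p ∈ ({-1} : Set ℝ) ×ˢ Icc (0 : ℝ) 1 ∪ Icc (-1 : ℝ) 0 ×ˢ ({1} : Set ℝ),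
        |(a p).im - 0 - 2 * Real.pi * u| < Real.pi / 2) ∧
      (∀ p ∈ ({1} : Set ℝ) ×ˢ Icc (-1 : ℝ) 0 ∪ Icc (0 : ℝ) 1 ×ˢ ({-1} : Set ℝ),
        |(a p).im - Real.pi - 2 * Real.pi * v| < Real.pi / 2) := by
  have hF : ContinuousOn (fun p : ℝ × ℝ => τ p.2 - σ p.1) pairDom :=
    (h.contR.comp continuousOn_snd fun p hp => hp.2.1).sub
      (h.contL.comp continuousOn_fst fun p hp => hp.1)
  obtain ⟨a, ha, hexp⟩ := exists_log isCompact_pairDom starConvex_pairDom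
    (by simp [pairDom]) hF (by
      intro p hp
      rw [sub_ne_zero]
      rcases pairDom_cases hp with h' | h'
      · exact (h.neLR _ h'.1 _ h'.2).symm
      · exact h.neRL _ h'.2 _ h'.1)
  have m1 : (1 : ℝ) ∈ Icc (0 : ℝ) 1 := by norm_num
  have m2 : (-1 : ℝ) ∈ Icc (-1 : ℝ) 0 := by norm_num
  have sU : ({-1} : Set ℝ) ×ˢ Icc (0 : ℝ) 1 ∪ Icc (-1 : ℝ) 0 ×ˢ ({1} : Set ℝ) ⊆ pairDom := by
    rintro ⟨r, s⟩ (⟨rfl, hs⟩ | ⟨hr, rfl⟩)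
    · exact mem_pairDom_of_neg_pos m2 hs
    · exact mem_pairDom_of_neg_pos hr m1
  have sV : ({1} : Set ℝ) ×ˢ Icc (-1 : ℝ) 0 ∪ Icc (0 : ℝ) 1 ×ˢ ({-1} : Set ℝ) ⊆ pairDom := by
    rintro ⟨r, s⟩ (⟨rfl, hs⟩ | ⟨hr, rfl⟩)
    · exact mem_pairDom_of_pos_neg m1 hs
    · exact mem_pairDom_of_pos_neg hr m2
  obtain ⟨u, hu⟩ := band_of_log (isPreconnected_corner m2 m1) (ha.mono sU)
    (fun p hp => hexp p (sU hp)) 0 (by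
      rintro ⟨r, s⟩ (⟨rfl, hs⟩ | ⟨hr, rfl⟩)
      · simpa using h.botL s hs
      · simpa using h.topR r hr)
  obtain ⟨v, hv⟩ := band_of_log (isPreconnected_corner m1 m2) (ha.mono sV)
    (fun p hp => hexp p (sV hp)) Real.pi (by
      rintro ⟨r, s⟩ (⟨rfl, hs⟩ | ⟨hr, rfl⟩)
      · simpa using h.topL s hs
      · simpa using h.botR r hr)
  exact ⟨a, ha, hexp, u, v, hu, hv⟩

theorem axis_fst_mem {r : ℝ} (hr : r ∈ Icc (-1 : ℝ) 1) : (r, (0 : ℝ)) ∈ pairDom :=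
  ⟨hr, by norm_num, by simp⟩

theorem axis_snd_mem {r : ℝ} (hr : r ∈ Icc (-1 : ℝ) 1) : ((0 : ℝ), r) ∈ pairDom :=
  ⟨by norm_num, hr, by simp⟩

theorem rightOf_iff_fst {σ τ : ℝ → ℂ} {a : ℝ × ℝ → ℂ} (ha : ContinuousOn a pairDom)
    (hexp : ∀ p ∈ pairDom, Complex.exp (a p) = τ p.2 - σ p.1) :
    RightOf σ (τ 0) ↔ (a (1, 0)).im < (a (-1, 0)).im :=
  rightOf_iff_of_log (h := fun r => a (r, 0)) (ha.comp (by fun_prop) fun r hr => axis_fst_mem hr)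
    (fun r hr => hexp (r, 0) (axis_fst_mem hr))

theorem rightOf_iff_snd {σ τ : ℝ → ℂ} {a : ℝ × ℝ → ℂ} (ha : ContinuousOn a pairDom)
    (hexp : ∀ p ∈ pairDom, Complex.exp (a p) = τ p.2 - σ p.1) :
    RightOf τ (σ 0) ↔ (a (0, 1)).im < (a (0, -1)).im := by
  rw [rightOf_iff_of_log (h := fun r => a (0, r) + Real.pi * Complex.I)]
  · simp
  · exact (ha.comp (by fun_prop) fun r hr => axis_snd_mem hr).add continuousOn_const
  · intro r hr
    rw [Complex.exp_add, hexp _ (axis_snd_mem hr), Complex.exp_pi_mul_I]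
    simp

/-- Of two half-separated paths exactly one is to the right of the other. Both comparisons are
read off the same logarithm of `τ s - σ r`, once along each coordinate axis. -/
theorem HalfSep.rightOf_antisymm {σ τ : ℝ → ℂ} (h : HalfSep σ τ) :
    RightOf τ (σ 0) ↔ ¬ RightOf σ (τ 0) := by
  obtain ⟨a, ha, hexp, u, v, hu, hv⟩ := h.exists_arg
  rw [rightOf_iff_fst ha hexp, rightOf_iff_snd ha hexp,
    band_lt_iff (hu (-1, 0) (by simp)) (hv (1, 0) (by simp)),
    band_gt_iff (hu (0, 1) (by simp)) (hv (0, -1) (by simp)), not_lt]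

/-- If `τ 0` is to the right of `σ`, the argument of `τ s - σ r` can be normalized so that it is
above `-π/2` where `σ` is at its start or `τ` at its end, and below `-π/2` where `σ` is at its end or
`τ` at its start. -/
theorem HalfSep.exists_arg_of_rightOf {σ τ : ℝ → ℂ} (h : HalfSep σ τ) (hp : RightOf σ (τ 0)) :
    ∃ a : ℝ × ℝ → ℝ, ContinuousOn a pairDom ∧
      (∀ p ∈ pairDom, ∃ ρ > 0, τ p.2 - σ p.1 = (ρ : ℝ) * Complex.exp (a p * Complex.I)) ∧
      (∀ r ∈ Icc (0 : ℝ) 1, -(Real.pi / 2) < a (-1, r)) ∧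
      (∀ r ∈ Icc (-1 : ℝ) 0, -(Real.pi / 2) < a (r, 1)) ∧
      (∀ r ∈ Icc (-1 : ℝ) 0, a (1, r) < -(Real.pi / 2)) ∧
      (∀ r ∈ Icc (0 : ℝ) 1, a (r, -1) < -(Real.pi / 2)) := by
  obtain ⟨a, ha, hexp, u, v, hu, hv⟩ := h.exists_arg
  rw [rightOf_iff_fst ha hexp,
    band_lt_iff (hu (-1, 0) (by simp)) (hv (1, 0) (by simp))] at hp
  have hvu : (v : ℝ) + 1 ≤ u := by exact_mod_cast hp
  have hpi := Real.pi_pos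
  have bu : ∀ {x : ℝ}, |x - 0 - 2 * Real.pi * u| < Real.pi / 2 →
      -(Real.pi / 2) < x - 2 * Real.pi * u := by
    intro x hx; rw [abs_lt] at hx; linarith
  have bv : ∀ {x : ℝ}, |x - Real.pi - 2 * Real.pi * v| < Real.pi / 2 →
      x - 2 * Real.pi * u < -(Real.pi / 2) := by
    intro x hx; rw [abs_lt] at hx; nlinarith
  refine ⟨fun p => (a p).im - 2 * Real.pi * u, ?_, ?_, ?_, ?_, ?_, ?_⟩
  · exact (Complex.continuous_im.comp_continuousOn ha).sub continuousOn_const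
  · intro p hp
    refine ⟨Real.exp (a p).re, Real.exp_pos _, ?_⟩
    rw [← hexp p hp, Complex.ofReal_exp, ← Complex.exp_add, Complex.exp_eq_exp_iff_exists_int]
    refine ⟨u, ?_⟩
    apply Complex.ext <;> simp
    ring
  · exact fun r hr => bu (hu (-1, r) (Or.inl ⟨rfl, hr⟩))
  · exact fun r hr => bu (hu (r, 1) (Or.inr ⟨hr, rfl⟩))
  · exact fun r hr => bv (hv (1, r) (Or.inl ⟨rfl, hr⟩))
  · exact fun r hr => bv (hv (r, -1) (Or.inr ⟨hr, rfl⟩))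

/-! ### Cyclic triples -/

/-- Determinations of two directions at angle `π / 3` that are near a common angle agree. -/
theorem band_eq {y ψ : ℝ} {k k' : ℤ} (h : |y - ψ - 2 * Real.pi * k| < Real.pi / 2)
    (h' : |y - (ψ + Real.pi / 3) - 2 * Real.pi * k'| < Real.pi / 2) : k = k' := by
  have hpi := Real.pi_pos
  rw [abs_lt] at h h'
  have h1 : ((k - k' : ℤ) : ℝ) < 1 := by push_cast; nlinarith
  have h2 : (-1 : ℝ) < ((k - k' : ℤ) : ℝ) := by push_cast; nlinarith
  have h3 : k - k' < 1 := by exact_mod_cast h1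
  have h4 : -1 < k - k' := by exact_mod_cast h2
  omega

/-- Triples of parameters in `[-1, 1]³` whose pairs all have weakly opposite signs; at each of
them at least one parameter vanishes. -/
def triDom : Set (ℝ × ℝ × ℝ) :=
  {p | (p.1, p.2.1) ∈ pairDom ∧ (p.2.1, p.2.2) ∈ pairDom ∧ (p.2.2, p.1) ∈ pairDom}

theorem isCompact_triDom : IsCompact triDom := by
  have hc := isCompact_pairDom.isClosed
  refine (isCompact_Icc.prod (isCompact_Icc.prod isCompact_Icc) :
    IsCompact (Icc (-1 : ℝ) 1 ×ˢ Icc (-1 : ℝ) 1 ×ˢ Icc (-1 : ℝ) 1)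
    ).of_isClosed_subset ?_ fun p hp => ⟨hp.1.1, hp.1.2.1, hp.2.1.2.1⟩
  exact (hc.preimage (by fun_prop : Continuous fun p : ℝ × ℝ × ℝ => (p.1, p.2.1))).inter
    ((hc.preimage (by fun_prop : Continuous fun p : ℝ × ℝ × ℝ => (p.2.1, p.2.2))).inter
      (hc.preimage (by fun_prop : Continuous fun p : ℝ × ℝ × ℝ => (p.2.2, p.1))))

theorem starConvex_triDom : StarConvex ℝ 0 triDom := by
  rw [starConvex_zero_iff]
  intro p hp a ha ha'
  have h := starConvex_zero_iff.1 starConvex_pairDom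
  exact ⟨h hp.1 ha ha', h hp.2.1 ha ha', h hp.2.2 ha ha'⟩

/-- Three pairwise half-separated paths are never cyclically to the right of one another.

Let `A`, `B`, `C` be the normalized arguments of `τ - σ`, `υ - τ`, `σ - υ` on `triDom`. They are never
all equal, as the three differences sum to zero. So `Z = A + B ω + C ω²`, with `ω` a primitive cube root
of unity, has no zero on the star-shaped set `triDom` and has a continuous logarithm. On each of the six
faces where one parameter is `±1`, one of `A`, `B`, `C` exceeds another, which confines `Z` to a
half-plane. The directions of these half-planes turn by `π / 3` from each face to the next around the
hexagon formed by the faces, a total of `2π`. -/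
theorem not_cyclic {σ τ υ : ℝ → ℂ} (h₁ : HalfSep σ τ) (h₂ : HalfSep τ υ) (h₃ : HalfSep υ σ)
    (p₁ : RightOf σ (τ 0)) (p₂ : RightOf τ (υ 0)) (p₃ : RightOf υ (σ 0)) : False := by
  obtain ⟨a, ha, ea, a1, a2, a3, a4⟩ := h₁.exists_arg_of_rightOf p₁
  obtain ⟨b, hb, eb, b1, b2, b3, b4⟩ := h₂.exists_arg_of_rightOf p₂
  obtain ⟨c, hc, ec, c1, c2, c3, c4⟩ := h₃.exists_arg_of_rightOf p₃
  set A : ℝ × ℝ × ℝ → ℝ := fun p => a (p.1, p.2.1) with hA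
  set B : ℝ × ℝ × ℝ → ℝ := fun p => b (p.2.1, p.2.2) with hB
  set C : ℝ × ℝ × ℝ → ℝ := fun p => c (p.2.2, p.1) with hC
  have cA : ContinuousOn A triDom := ha.comp (by fun_prop) fun p hp => hp.1
  have cB : ContinuousOn B triDom := hb.comp (by fun_prop) fun p hp => hp.2.1
  have cC : ContinuousOn C triDom := hc.comp (by fun_prop) fun p hp => hp.2.2
  have hs3 : 0 < √(3 : ℝ) := by positivity
  have hs3' : √(3 : ℝ) * √3 = 3 := Real.mul_self_sqrt (by norm_num)
  -- `Z = A + B ω + C ω²`, written in real and imaginary parts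
  set Z : ℝ × ℝ × ℝ → ℂ := fun p =>
    ((A p - (B p + C p) / 2 : ℝ) : ℂ) + ((√3 / 2 * (B p - C p) : ℝ) : ℂ) * Complex.I with hZ
  have Zre : ∀ p, (Z p).re = A p - (B p + C p) / 2 := fun p => by
    simp only [hZ, Complex.add_re, Complex.ofReal_re, Complex.mul_re,
      Complex.I_re, Complex.I_im, Complex.ofReal_im]; ring
  have Zim : ∀ p, (Z p).im = √3 / 2 * (B p - C p) := fun p => by
    simp only [hZ, Complex.add_im, Complex.ofReal_re, Complex.mul_im,
      Complex.I_re, Complex.I_im, Complex.ofReal_im]; ring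
  have cZ : ContinuousOn Z triDom := by
    refine ContinuousOn.add ?_ (ContinuousOn.mul ?_ continuousOn_const)
    · exact Complex.continuous_ofReal.comp_continuousOn (by fun_prop)
    · exact Complex.continuous_ofReal.comp_continuousOn (by fun_prop)
  have nZ : ∀ p ∈ triDom, Z p ≠ 0 := by
    intro p hp h0
    have hBC : B p = C p := by
      have h := Zim p
      rw [h0, Complex.zero_im] at h
      have : B p - C p = 0 := by
        rcases mul_eq_zero.1 h.symm with h | h
        · linarith
        · exact h
      linarith
    have hAC : A p = C p := by
      have h := Zre p
      rw [h0, Complex.zero_re] at h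
      linarith
    obtain ⟨ρ₁, q₁, e₁⟩ := ea _ hp.1
    obtain ⟨ρ₂, q₂, e₂⟩ := eb _ hp.2.1
    obtain ⟨ρ₃, q₃, e₃⟩ := ec _ hp.2.2
    change _ = _ * Complex.exp (A p * Complex.I) at e₁
    change _ = _ * Complex.exp (B p * Complex.I) at e₂
    change _ = _ * Complex.exp (C p * Complex.I) at e₃
    rw [hAC] at e₁
    rw [hBC] at e₂
    have : ((ρ₁ + ρ₂ + ρ₃ : ℝ) : ℂ) * Complex.exp (C p * Complex.I) = 0 := by
      push_cast
      simp only at e₁ e₂ e₃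
      linear_combination -e₁ - e₂ - e₃
    rcases mul_eq_zero.1 this with h | h
    · have : ρ₁ + ρ₂ + ρ₃ = 0 := by exact_mod_cast h
      linarith
    · exact Complex.exp_ne_zero _ h
  obtain ⟨H, cH, eH⟩ := exists_log isCompact_triDom starConvex_triDom
    (by simp [triDom, pairDom]) cZ nZ
  -- `K` parametrizes each face: with one parameter equal to `±1`, the other two have the opposite
  -- sign and one of them vanishes
  set K : Set (ℝ × ℝ) := ({0} : Set ℝ) ×ˢ Icc (0 : ℝ) 1 ∪ Icc (0 : ℝ) 1 ×ˢ ({0} : Set ℝ) with hK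
  have zm : (0 : ℝ) ∈ Icc (0 : ℝ) 1 := by norm_num
  have pK : IsPreconnected K := isPreconnected_corner zm zm
  have mK : ∀ q ∈ K, 0 ≤ q.1 ∧ q.1 ≤ 1 ∧ 0 ≤ q.2 ∧ q.2 ≤ 1 ∧ q.1 * q.2 = 0 := by
    rintro ⟨x, y⟩ (⟨rfl, hy⟩ | ⟨hx, rfl⟩)
    · exact ⟨le_rfl, zero_le_one, hy.1, hy.2, zero_mul _⟩
    · exact ⟨hx.1, hx.2, le_rfl, zero_le_one, mul_zero _⟩
  have k01 : ((0 : ℝ), (1 : ℝ)) ∈ K := Or.inl ⟨rfl, by norm_num⟩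
  have k10 : ((1 : ℝ), (0 : ℝ)) ∈ K := Or.inr ⟨by norm_num, rfl⟩
  have face : ∀ φ : ℝ × ℝ → ℝ × ℝ × ℝ, Continuous φ → (∀ q ∈ K, φ q ∈ triDom) → ∀ ψ : ℝ,
      (∀ q ∈ K, 0 < (Z (φ q)).re * Real.cos ψ + (Z (φ q)).im * Real.sin ψ) →
      ∃ k : ℤ, ∀ q ∈ K, |(H (φ q)).im - ψ - 2 * Real.pi * k| < Real.pi / 2 :=
    fun φ hφ hm ψ hpos => band_of_log pK (cH.comp hφ.continuousOn hm)
      (fun q hq => eH _ (hm q hq)) ψ hpos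
  have memD : ∀ q ∈ K, ∀ φ : ℝ × ℝ × ℝ, (φ = (-1, q.1, q.2) ∨ φ = (q.1, -1, q.2) ∨
      φ = (q.1, q.2, -1) ∨ φ = (1, -q.1, -q.2) ∨ φ = (-q.1, 1, -q.2) ∨ φ = (-q.1, -q.2, 1)) →
      φ ∈ triDom := by
    intro q hq φ hφ
    obtain ⟨x0, x1, y0, y1, xy⟩ := mK q hq
    rcases hφ with rfl | rfl | rfl | rfl | rfl | rfl <;>
      refine ⟨⟨⟨?_, ?_⟩, ⟨?_, ?_⟩, ?_⟩, ⟨⟨?_, ?_⟩, ⟨?_, ?_⟩, ?_⟩, ⟨⟨?_, ?_⟩, ⟨?_, ?_⟩, ?_⟩⟩ <;>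
      simp only <;> nlinarith
  obtain ⟨k₁, f₁⟩ := face (fun q => (-1, q.1, q.2)) (by fun_prop)
    (fun q hq => memD q hq _ (by simp)) (Real.pi / 6) (by
      intro q hq
      obtain ⟨x0, x1, y0, y1, xy⟩ := mK q hq
      rw [Zre, Zim, Real.cos_pi_div_six, Real.sin_pi_div_six]
      have u1 := a1 q.1 ⟨x0, x1⟩
      have u2 := c4 q.2 ⟨y0, y1⟩
      simp only [hA, hB, hC]
      nlinarith)
  obtain ⟨k₂, f₂⟩ := face (fun q => (-q.1, -q.2, 1)) (by fun_prop)
    (fun q hq => memD q hq _ (by simp)) (Real.pi / 6 + Real.pi / 3) (by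
      intro q hq
      obtain ⟨x0, x1, y0, y1, xy⟩ := mK q hq
      rw [Zre, Zim, show Real.pi / 6 + Real.pi / 3 = Real.pi / 2 by ring,
        Real.cos_pi_div_two, Real.sin_pi_div_two]
      have u1 := b2 (-q.2) ⟨by linarith, by linarith⟩
      have u2 := c3 (-q.1) ⟨by linarith, by linarith⟩
      simp only [hA, hB, hC]
      nlinarith)
  obtain ⟨k₃, f₃⟩ := face (fun q => (q.1, -1, q.2)) (by fun_prop)
    (fun q hq => memD q hq _ (by simp)) (Real.pi / 6 + Real.pi / 3 + Real.pi / 3) (by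
      intro q hq
      obtain ⟨x0, x1, y0, y1, xy⟩ := mK q hq
      rw [Zre, Zim, show Real.pi / 6 + Real.pi / 3 + Real.pi / 3 = Real.pi - Real.pi / 6 by ring,
        Real.cos_pi_sub, Real.sin_pi_sub, Real.cos_pi_div_six, Real.sin_pi_div_six]
      have u1 := b1 q.2 ⟨y0, y1⟩
      have u2 := a4 q.1 ⟨x0, x1⟩
      simp only [hA, hB, hC]
      nlinarith)
  obtain ⟨k₄, f₄⟩ := face (fun q => (1, -q.1, -q.2)) (by fun_prop)
    (fun q hq => memD q hq _ (by simp)) (Real.pi / 6 + Real.pi / 3 + Real.pi / 3 + Real.pi / 3) (by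
      intro q hq
      obtain ⟨x0, x1, y0, y1, xy⟩ := mK q hq
      rw [Zre, Zim, show Real.pi / 6 + Real.pi / 3 + Real.pi / 3 + Real.pi / 3
        = Real.pi / 6 + Real.pi by ring,
        Real.cos_add_pi, Real.sin_add_pi, Real.cos_pi_div_six, Real.sin_pi_div_six]
      have u1 := c2 (-q.2) ⟨by linarith, by linarith⟩
      have u2 := a3 (-q.1) ⟨by linarith, by linarith⟩
      simp only [hA, hB, hC]
      nlinarith)
  obtain ⟨k₅, f₅⟩ := face (fun q => (q.1, q.2, -1)) (by fun_prop)
    (fun q hq => memD q hq _ (by simp))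
    (Real.pi / 6 + Real.pi / 3 + Real.pi / 3 + Real.pi / 3 + Real.pi / 3) (by
      intro q hq
      obtain ⟨x0, x1, y0, y1, xy⟩ := mK q hq
      rw [Zre, Zim, show Real.pi / 6 + Real.pi / 3 + Real.pi / 3 + Real.pi / 3 + Real.pi / 3
        = Real.pi / 2 + Real.pi by ring,
        Real.cos_add_pi, Real.sin_add_pi, Real.cos_pi_div_two, Real.sin_pi_div_two]
      have u1 := c1 q.1 ⟨x0, x1⟩
      have u2 := b4 q.2 ⟨y0, y1⟩
      simp only [hA, hB, hC]
      nlinarith)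
  obtain ⟨k₆, f₆⟩ := face (fun q => (-q.1, 1, -q.2)) (by fun_prop)
    (fun q hq => memD q hq _ (by simp))
    (Real.pi / 6 + Real.pi / 3 + Real.pi / 3 + Real.pi / 3 + Real.pi / 3 + Real.pi / 3) (by
      intro q hq
      obtain ⟨x0, x1, y0, y1, xy⟩ := mK q hq
      rw [Zre, Zim, show Real.pi / 6 + Real.pi / 3 + Real.pi / 3 + Real.pi / 3 + Real.pi / 3
        + Real.pi / 3 = 2 * Real.pi - Real.pi / 6 by ring,
        Real.cos_two_pi_sub, Real.sin_two_pi_sub, Real.cos_pi_div_six, Real.sin_pi_div_six]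
      have u1 := a2 (-q.1) ⟨by linarith, by linarith⟩
      have u2 := b3 (-q.2) ⟨by linarith, by linarith⟩
      simp only [hA, hB, hC]
      nlinarith)
  -- consecutive faces share a corner, where their determinations are compared
  have g₁ := f₁ _ k01
  have g₁' := f₁ _ k10
  have g₂ := f₂ _ k10
  have g₂' := f₂ _ k01
  have g₃ := f₃ _ k01
  have g₃' := f₃ _ k10
  have g₄ := f₄ _ k10
  have g₄' := f₄ _ k01
  have g₅ := f₅ _ k10
  have g₅' := f₅ _ k01
  have g₆ := f₆ _ k01
  have g₆' := f₆ _ k10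
  simp only [neg_zero] at g₁ g₁' g₂ g₂' g₃ g₃' g₄ g₄' g₅ g₅' g₆ g₆'
  have l₁ := band_eq g₁ g₂
  have l₂ := band_eq g₂' g₃
  have l₃ := band_eq g₃' g₄
  have l₄ := band_eq g₄' g₅
  have l₅ := band_eq g₅' g₆
  -- back on the first face, its direction has turned by `2π`
  have g₇ : |(H (-1, 1, 0)).im - (Real.pi / 6 + Real.pi / 3 + Real.pi / 3 + Real.pi / 3 +
      Real.pi / 3 + Real.pi / 3 + Real.pi / 3) - 2 * Real.pi * ((k₁ - 1 : ℤ) : ℝ)|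
      < Real.pi / 2 := by
    convert g₁' using 2
    push_cast; ring
  have l₆ := band_eq g₆' g₇
  omega

/-! ### Translates and the degree of the lifted triangle -/

/-- The deck translation by `n` full turns, `2πi n`. -/
def deck (n : ℤ) : ℂ := 2 * (Real.pi : ℂ) * Complex.I * (n : ℂ)

theorem deck_add (m n : ℤ) : deck (m + n) = deck m + deck n := by
  simp only [deck]; push_cast; ring

theorem deck_neg (n : ℤ) : deck (-n) = -deck n := by
  simp only [deck]; push_cast; ring

theorem deck_re (n : ℤ) : (deck n).re = 0 := by simp [deck]

theorem deck_im (n : ℤ) : (deck n).im = 2 * Real.pi * n := by simp [deck]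

theorem rightOf_shift {σ : ℝ → ℂ} {c q : ℂ} :
    RightOf (fun r => σ r + c) q ↔ RightOf σ (q - c) := by
  simp only [RightOf, sub_add_eq_sub_sub_swap]

/-- High above `σ` a point is to the left of it, far below it is to the right: then `q - σ r`
stays in one open half-plane and its principal argument can be used. -/
theorem exists_large_shift {σ : ℝ → ℂ} {q : ℂ} (hσ : ContinuousOn σ (Icc (-1) 1))
    (hlo : (σ (-1)).re < q.re) (hhi : q.re < (σ 1).re) :
    ∃ N : ℕ, 0 < N ∧ ¬ RightOf σ (q + deck N) ∧ RightOf σ (q + deck (-N)) := by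
  have hpi := Real.pi_gt_three
  have hc : ContinuousOn (fun r => q - σ r) (Icc (-1 : ℝ) 1) := continuousOn_const.sub hσ
  obtain ⟨M, hM⟩ := isCompact_Icc.exists_bound_of_continuousOn hc
  obtain ⟨N, hN⟩ := exists_nat_gt (max M 0)
  have hNM : M < N := (le_max_left _ _).trans_lt hN
  have hN0 : (0 : ℝ) < N := (le_max_right _ _).trans_lt hN
  have m1 : (1 : ℝ) ∈ Icc (-1 : ℝ) 1 := by norm_num
  have m2 : (-1 : ℝ) ∈ Icc (-1 : ℝ) 1 := by norm_num
  have him : ∀ r ∈ Icc (-1 : ℝ) 1, |q.im - (σ r).im| < 2 * Real.pi * N := by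
    intro r hr
    have h1 := (Complex.abs_im_le_norm _).trans (hM r hr)
    rw [Complex.sub_im] at h1
    nlinarith
  have upper : ∀ r ∈ Icc (-1 : ℝ) 1, 0 < (q + deck N - σ r).im := by
    intro r hr
    have := (abs_lt.1 (him r hr)).1
    simp only [Complex.sub_im, Complex.add_im, deck_im, Int.cast_natCast]
    linarith
  have lower : ∀ r ∈ Icc (-1 : ℝ) 1, (q + deck (-N) - σ r).im < 0 := by
    intro r hr
    have := (abs_lt.1 (him r hr)).2
    simp only [Complex.sub_im, Complex.add_im, deck_im, Int.cast_natCast, Int.cast_neg]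
    linarith
  have re1 : ∀ n, (q + deck n - σ 1).re < 0 := fun n => by
    simp only [Complex.sub_re, Complex.add_re, deck_re]; linarith
  have re2 : ∀ n, 0 < (q + deck n - σ (-1)).re := fun n => by
    simp only [Complex.sub_re, Complex.add_re, deck_re]; linarith
  have lift : ∀ n, (∀ r ∈ Icc (-1 : ℝ) 1, (q + deck n - σ r).im ≠ 0) →
      (RightOf σ (q + deck n) ↔
        Complex.arg (q + deck n - σ 1) < Complex.arg (q + deck n - σ (-1))) := by
    intro n hn
    simp only [← Complex.log_im]
    refine rightOf_iff_of_log (h := fun r => Complex.log (q + deck n - σ r)) ?_ ?_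
    · exact (continuousOn_const.sub hσ).clog fun r hr => Or.inr (hn r hr)
    · intro r hr
      exact Complex.exp_log fun h0 => hn r hr (by rw [h0, Complex.zero_im])
  have arg2 : ∀ n, |Complex.arg (q + deck n - σ (-1))| < Real.pi / 2 := fun n =>
    Complex.abs_arg_lt_pi_div_two_iff.2 (Or.inl (re2 n))
  refine ⟨N, by exact_mod_cast hN0, ?_, ?_⟩
  · rw [lift _ fun r hr => (upper r hr).ne', not_lt]
    refine (abs_lt.1 (arg2 _)).2.le.trans (not_lt.1 fun h => ?_)
    rcases Complex.arg_lt_pi_div_two_iff.1 h with h | h | h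
    · exact lt_asymm h (re1 _)
    · exact lt_asymm h (upper 1 m1)
    · exact (re1 _).ne (by rw [h, Complex.zero_re])
  · rw [lift _ fun r hr => (lower r hr).ne]
    refine lt_of_le_of_lt (not_lt.1 fun h => ?_) (abs_lt.1 (arg2 _)).1
    rcases Complex.neg_pi_div_two_lt_arg_iff.1 h with h | h
    · exact lt_asymm h (re1 _)
    · exact absurd (lower 1 m1) (not_lt.2 h)

/-- A predicate on `ℤ` that is additively closed together with its complement, holds at some
negative integer and fails at the opposite one, holds at every negative integer and fails at every
positive one; the symmetry `hsymm` then leaves only two values of `L`. -/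
theorem int_cocycle {F : ℤ → Prop} {L : ℤ} {N : ℕ}
    (hadd : ∀ n k, F n → F k → F (n + k)) (hadd' : ∀ n k, ¬ F n → ¬ F k → ¬ F (n + k))
    (hsymm : ∀ n, F n ↔ ¬ F (-n - L)) (hN : 0 < N) (hpos : ¬ F N) (hneg : F (-N)) :
    L = 1 ∨ L = -1 := by
  have e1 : ∀ a, F a → ∀ n : ℕ, F ((n + 1 : ℕ) * a) := by
    intro a ha n
    induction n with
    | zero => simpa using ha
    | succ n ih =>
      have := hadd _ _ ih ha
      rwa [show ((n + 1 : ℕ) : ℤ) * a + a = ((n + 1 + 1 : ℕ) : ℤ) * a by push_cast; ring] at this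
  have e2 : ∀ a, ¬ F a → ∀ n : ℕ, ¬ F ((n + 1 : ℕ) * a) := by
    intro a ha n
    induction n with
    | zero => simpa using ha
    | succ n ih =>
      have := hadd' _ _ ih ha
      rwa [show ((n + 1 : ℕ) : ℤ) * a + a = ((n + 1 + 1 : ℕ) : ℤ) * a by push_cast; ring] at this
  obtain ⟨M, rfl⟩ := Nat.exists_eq_succ_of_ne_zero hN.ne'
  have h1 : ¬ F 1 := fun h => hpos (by simpa using e1 1 h M)
  have h2 : F (-1) := by
    by_contra h
    exact e2 (-1) h M (by simpa using hneg)
  have p1 : ∀ n : ℤ, 1 ≤ n → ¬ F n := by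
    intro n hn
    have := e2 1 h1 (n - 1).toNat
    rwa [mul_one, show (((n - 1).toNat + 1 : ℕ) : ℤ) = n by omega] at this
  have p2 : ∀ n : ℤ, n ≤ -1 → F n := by
    intro n hn
    have := e1 (-1) h2 (-n - 1).toNat
    rwa [show (((-n - 1).toNat + 1 : ℕ) : ℤ) * (-1) = n by omega] at this
  by_contra hL
  rw [not_or] at hL
  rcases lt_trichotomy L 0 with h | h | h
  · exact p1 (-1 - L) (by omega) (not_not.1 (mt (hsymm 1).2 h1))
  · subst h
    have := hsymm 0
    simp at this
  · exact (hsymm (-1)).1 h2 (p2 _ (by omega))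

/-- The statement after passing to the universal cover: `γ i` are the lifted paths through the
vertices, and `ε` is the lifted triangle, whose vertices sit at times `0`, `1 / 3`, `2 / 3`. -/
theorem cylinder_degree {γ : Fin 3 → ℝ → ℂ} {ε : ℝ → ℂ} {L : ℤ}
    (hγ : ∀ i, ContinuousOn (γ i) (Icc (-1) 1)) (hε : ContinuousOn ε (Icc 0 1))
    (h0 : γ 0 0 = ε 0) (h1 : γ 1 0 = ε (1 / 3)) (h2 : γ 2 0 = ε (2 / 3))
    (hL : ε 1 = ε 0 + deck L)
    (hbot : ∀ i j, i ≠ j → ∀ r ∈ Icc (0 : ℝ) 1, (γ i (-1)).re < (γ j r).re)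
    (htop : ∀ i j, i ≠ j → ∀ r ∈ Icc (-1 : ℝ) 0, (γ j r).re < (γ i 1).re)
    (hεbot : ∀ i, ∀ t ∈ Icc (0 : ℝ) 1, (γ i (-1)).re < (ε t).re)
    (hεtop : ∀ i, ∀ t ∈ Icc (0 : ℝ) 1, (ε t).re < (γ i 1).re)
    (hne : ∀ i j, i ≠ j → ∀ r ∈ Icc (-1 : ℝ) 0, ∀ s ∈ Icc (0 : ℝ) 1, ∀ n,
      γ i r ≠ γ j s + deck n)
    (hε0 : ∀ t ∈ Icc (1 / 3 : ℝ) (2 / 3), ∀ r ∈ Icc (-1 : ℝ) 1, ∀ n, ε t + deck n ≠ γ 0 r)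
    (hε1 : ∀ t ∈ Icc (2 / 3 : ℝ) 1, ∀ r ∈ Icc (-1 : ℝ) 1, ∀ n, ε t + deck n ≠ γ 1 r)
    (hε2 : ∀ t ∈ Icc (0 : ℝ) (1 / 3), ∀ r ∈ Icc (-1 : ℝ) 1, ∀ n, ε t + deck n ≠ γ 2 r) :
    L = 1 ∨ L = -1 := by
  set w : Fin 3 → Fin 3 → ℤ → Prop := fun i j n => RightOf (γ i) (γ j 0 + deck n) with hw
  have sep : ∀ i j, i ≠ j → ∀ m n, HalfSep (fun r => γ i r + deck m) (fun r => γ j r + deck n) := by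
    intro i j hij m n
    have aux : ∀ i j, i ≠ j → ∀ m n, ∀ r ∈ Icc (-1 : ℝ) 0, ∀ s ∈ Icc (0 : ℝ) 1,
        γ i r + deck m ≠ γ j s + deck n := by
      intro i j hij m n r hr s hs h
      refine hne i j hij r hr s hs (n + -m) ?_
      rw [deck_add, deck_neg]
      linear_combination h
    refine ⟨(hγ i).add continuousOn_const, (hγ j).add continuousOn_const,
      aux i j hij m n, aux j i hij.symm n m, ?_, ?_, ?_, ?_⟩ <;>
      simp only [Complex.add_re, deck_re, add_zero]
    exacts [hbot i j hij, htop i j hij, hbot j i hij.symm, htop j i hij.symm]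
  have sh : ∀ i j m n, RightOf (fun r => γ i r + deck m) (γ j 0 + deck n) ↔ w i j (n - m) := by
    intro i j m n
    change _ ↔ RightOf (γ i) (γ j 0 + deck (n - m))
    rw [rightOf_shift, sub_eq_add_neg n, deck_add, deck_neg, ← add_assoc, sub_eq_add_neg]
  have anti : ∀ i j, i ≠ j → ∀ n, (w j i (-n) ↔ ¬ w i j n) := by
    intro i j hij n
    have := (sep i j hij 0 n).rightOf_antisymm
    rw [sh, sh] at this
    simpa using this
  have tri : ∀ i j k, i ≠ j → j ≠ k → k ≠ i → ∀ n m, w i j n → w j k m → ¬ w k i (-(n + m)) := by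
    intro i j k hij hjk hki n m a b c
    refine not_cyclic (sep i j hij 0 n) (sep j k hjk n (n + m)) (sep k i hki (n + m) 0)
      ?_ ?_ ?_ <;> rw [sh]
    · simpa using a
    · simpa using b
    · simpa using c
  have hom : ∀ i, ∀ t₁ t₂ : ℝ, 0 ≤ t₁ → t₁ ≤ t₂ → t₂ ≤ 1 →
      (∀ t ∈ Icc t₁ t₂, ∀ r ∈ Icc (-1 : ℝ) 1, ∀ n, ε t + deck n ≠ γ i r) → ∀ n,
      (RightOf (γ i) (ε t₁ + deck n) ↔ RightOf (γ i) (ε t₂ + deck n)) := by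
    intro i t₁ t₂ h0 h12 h1 hav n
    have hsub : Icc t₁ t₂ ⊆ Icc 0 1 := Icc_subset_Icc h0 h1
    refine rightOf_iff_of_path (ε := fun t => ε t + deck n) h12 (hγ i)
      ((hε.mono hsub).add continuousOn_const) (fun t ht r hr => hav t ht r hr n) ?_ ?_ <;>
      simp only [Complex.add_re, deck_re, add_zero]
    · exact fun t ht => hεbot i t (hsub ht)
    · exact fun t ht => hεtop i t (hsub ht)
  have e20 : ∀ n, w 2 0 n ↔ w 2 1 n := by
    intro n
    simp only [hw, h0, h1]
    exact hom 2 _ _ le_rfl (by norm_num) (by norm_num) hε2 n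
  have e01 : ∀ n, w 0 1 n ↔ w 0 2 n := by
    intro n
    simp only [hw, h1, h2]
    exact hom 0 _ _ (by norm_num) (by norm_num) (by norm_num) hε0 n
  have e12 : ∀ n, w 1 2 n ↔ w 1 0 (L + n) := by
    intro n
    simp only [hw, h0, h2]
    rw [hom 1 _ _ (by norm_num) (by norm_num) le_rfl hε1 n, hL, deck_add, add_assoc]
  -- all comparisons are expressed through `F = w 0 1`
  have f12 : ∀ n, w 1 2 n ↔ w 0 1 n := by
    intro n
    have a1 := anti 1 2 (by decide) n
    have a2 := anti 0 2 (by decide) n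
    rw [e20, a1, not_iff_not] at a2
    rw [e01, a2]
  obtain ⟨N, hN, hN1, hN2⟩ := exists_large_shift (q := γ 1 0) (hγ 0)
    (hbot 0 1 (by decide) 0 (by norm_num)) (htop 0 1 (by decide) 0 (by norm_num))
  refine int_cocycle (F := w 0 1) ?_ ?_ ?_ hN hN1 hN2
  · intro n k hn hk
    have := tri 0 1 2 (by decide) (by decide) (by decide) n k hn ((f12 k).2 hk)
    rw [anti 0 2 (by decide), not_not, ← e01] at this
    exact this
  · intro n k hn hk h
    have b1 : w 2 1 (-n) := (anti 1 2 (by decide) n).2 (by rwa [f12])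
    have := tri 0 2 1 (by decide) (by decide) (by decide) (n + k) (-n) ((e01 _).1 h) b1
    rw [anti 0 1 (by decide), not_not] at this
    exact hk (by simpa using this)
  · intro n
    rw [← anti 0 1 (by decide), ← f12, e12, show -(-n - L) = L + n by ring]

/-! ### Curves in the plane -/

theorem IsWindingNumber.ne {γ : ℝ → ℂ} {A : ℂ} {n : ℤ} (h : IsWindingNumber γ A n) {t : ℝ}
    (ht : t ∈ Icc (0 : ℝ) 1) : γ t ≠ A := by
  obtain ⟨k, -, hk, -⟩ := h
  rw [hk t ht, Ne, add_eq_left]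
  exact Complex.exp_ne_zero _

/-- The statement for a closed curve `e` and paths `c i : [-1, 1] → ℂ` from near `A` to near `B`
through the points `e 0`, `e (1 / 3)`, `e (2 / 3)`. Nearness is measured by the ratio
`‖z - A‖ / ‖z - B‖`, whose logarithm is the real part of the lifted coordinate; the hypotheses on it are
cleared of denominators. -/
theorem planar_version {A B : ℂ} {c : Fin 3 → ℝ → ℂ} {e : ℝ → ℂ} {n₄ n₅ : ℤ} (hAB : A ≠ B)
    (h₄ : IsWindingNumber e A n₄) (h₅ : IsWindingNumber e B n₅)
    (hc : ∀ i, ContinuousOn (c i) (Icc (-1) 1))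
    (hcA : ∀ i, ∀ r ∈ Icc (-1 : ℝ) 1, c i r ≠ A) (hcB : ∀ i, ∀ r ∈ Icc (-1 : ℝ) 1, c i r ≠ B)
    (h0 : c 0 0 = e 0) (h1 : c 1 0 = e (1 / 3)) (h2 : c 2 0 = e (2 / 3))
    (hbot : ∀ i j, ∀ r ∈ Icc (0 : ℝ) 1,
      ‖c i (-1) - A‖ * ‖c j r - B‖ < ‖c j r - A‖ * ‖c i (-1) - B‖)
    (htop : ∀ i j, ∀ r ∈ Icc (-1 : ℝ) 0,
      ‖c i 1 - B‖ * ‖c j r - A‖ < ‖c j r - B‖ * ‖c i 1 - A‖)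
    (hebot : ∀ i, ∀ t ∈ Icc (0 : ℝ) 1,
      ‖c i (-1) - A‖ * ‖e t - B‖ < ‖e t - A‖ * ‖c i (-1) - B‖)
    (hetop : ∀ i, ∀ t ∈ Icc (0 : ℝ) 1, ‖c i 1 - B‖ * ‖e t - A‖ < ‖e t - B‖ * ‖c i 1 - A‖)
    (hne : ∀ i j, i ≠ j → ∀ r ∈ Icc (-1 : ℝ) 0, ∀ s ∈ Icc (0 : ℝ) 1, c i r ≠ c j s)
    (he0 : ∀ t ∈ Icc (1 / 3 : ℝ) (2 / 3), ∀ r ∈ Icc (-1 : ℝ) 1, e t ≠ c 0 r)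
    (he1 : ∀ t ∈ Icc (2 / 3 : ℝ) 1, ∀ r ∈ Icc (-1 : ℝ) 1, e t ≠ c 1 r)
    (he2 : ∀ t ∈ Icc (0 : ℝ) (1 / 3), ∀ r ∈ Icc (-1 : ℝ) 1, e t ≠ c 2 r) :
    n₄ - n₅ = 1 ∨ n₄ - n₅ = -1 := by
  have eB : ∀ t ∈ Icc (0 : ℝ) 1, e t ≠ B := fun t ht => h₅.ne ht
  obtain ⟨k₄, c₄, e₄, w₄⟩ := h₄
  obtain ⟨k₅, c₅, e₅, w₅⟩ := h₅
  -- the coordinate whose logarithm unrolls the plane minus `A` and `B`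
  set φ : ℂ → ℂ := fun z => (z - A) / (z - B) with hφ
  have φinj : ∀ z w, z ≠ B → w ≠ B → φ z = φ w → z = w := by
    intro z w hz hw h
    simp only [hφ] at h
    rw [div_eq_div_iff (sub_ne_zero.2 hz) (sub_ne_zero.2 hw)] at h
    have h3 : (z - w) * (A - B) = 0 := by linear_combination h
    rcases mul_eq_zero.1 h3 with h4 | h4
    · exact sub_eq_zero.1 h4
    · exact absurd (sub_eq_zero.1 h4) hAB
  set ε : ℝ → ℂ := fun t => k₄ t - k₅ t with hε
  have expε : ∀ t ∈ Icc (0 : ℝ) 1, Complex.exp (ε t) = φ (e t) := by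
    intro t ht
    simp only [hε, hφ]
    rw [Complex.exp_sub]
    congr 1
    · rw [e₄ t ht]; ring
    · rw [e₅ t ht]; ring
  have m0 : (0 : ℝ) ∈ Icc (-1 : ℝ) 1 := by norm_num
  have lift : ∀ i : Fin 3, ∀ t ∈ Icc (0 : ℝ) 1, c i 0 = e t → ∃ h : ℝ → ℂ,
      ContinuousOn h (Icc (-1) 1) ∧
      (∀ r ∈ Icc (-1 : ℝ) 1, Complex.exp (h r) = φ (c i r)) ∧ h 0 = ε t := by
    intro i t ht hit
    obtain ⟨h, hh, hexp⟩ := exists_log (F := fun r => φ (c i r)) isCompact_Icc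
      ((convex_Icc (-1 : ℝ) 1).starConvex m0) m0
      (((hc i).sub continuousOn_const).div ((hc i).sub continuousOn_const)
        fun r hr => sub_ne_zero.2 (hcB i r hr))
      (fun r hr => div_ne_zero (sub_ne_zero.2 (hcA i r hr)) (sub_ne_zero.2 (hcB i r hr)))
    refine ⟨fun r => h r + (ε t - h 0), hh.add continuousOn_const, fun r hr => ?_, by ring⟩
    rw [Complex.exp_add, Complex.exp_sub, expε t ht, hexp r hr, hexp 0 m0, hit, div_self, mul_one]
    rw [← expε t ht]
    exact Complex.exp_ne_zero _
  obtain ⟨g₀, hg₀, x₀, b₀⟩ := lift 0 0 (by norm_num) h0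
  obtain ⟨g₁, hg₁, x₁, b₁⟩ := lift 1 (1 / 3) (by norm_num) h1
  obtain ⟨g₂, hg₂, x₂, b₂⟩ := lift 2 (2 / 3) (by norm_num) h2
  set γ : Fin 3 → ℝ → ℂ := ![g₀, g₁, g₂] with hγ
  have cγ : ∀ i, ContinuousOn (γ i) (Icc (-1) 1) := by
    intro i; fin_cases i; exacts [hg₀, hg₁, hg₂]
  have xγ : ∀ i, ∀ r ∈ Icc (-1 : ℝ) 1, Complex.exp (γ i r) = φ (c i r) := by
    intro i; fin_cases i; exacts [x₀, x₁, x₂]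
  have re_lt : ∀ {x y z w : ℂ}, Complex.exp x = φ z → Complex.exp y = φ w → z ≠ B → w ≠ B →
      (x.re < y.re ↔ ‖z - A‖ * ‖w - B‖ < ‖w - A‖ * ‖z - B‖) := by
    intro x y z w hx hy hz hw
    rw [← Real.exp_lt_exp, ← Complex.norm_exp, ← Complex.norm_exp, hx, hy, hφ, norm_div, norm_div,
      div_lt_div_iff₀ (norm_pos_iff.2 (sub_ne_zero.2 hz)) (norm_pos_iff.2 (sub_ne_zero.2 hw))]
  have exp_deck : ∀ x n, Complex.exp (x + deck n) = Complex.exp x := by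
    intro x n
    rw [Complex.exp_add, deck, mul_comm _ (n : ℂ), Complex.exp_int_mul_two_pi_mul_I, mul_one]
  have mp : ∀ {r : ℝ}, r ∈ Icc (0 : ℝ) 1 → r ∈ Icc (-1 : ℝ) 1 := fun h => ⟨by linarith [h.1], h.2⟩
  have mn : ∀ {r : ℝ}, r ∈ Icc (-1 : ℝ) 0 → r ∈ Icc (-1 : ℝ) 1 := fun h => ⟨h.1, by linarith [h.2]⟩
  have m1 : (1 : ℝ) ∈ Icc (-1 : ℝ) 1 := by norm_num
  have m2 : (-1 : ℝ) ∈ Icc (-1 : ℝ) 1 := by norm_num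
  have avoid : ∀ i, ∀ t ∈ Icc (0 : ℝ) 1, ∀ r ∈ Icc (-1 : ℝ) 1, e t ≠ c i r → ∀ n,
      ε t + deck n ≠ γ i r := by
    intro i t ht r hr h n hEq
    refine h (φinj _ _ (eB t ht) (hcB i r hr) ?_)
    rw [← expε t ht, ← xγ i r hr, ← hEq, exp_deck]
  refine cylinder_degree (γ := γ) (ε := ε) cγ (c₄.sub c₅) b₀ b₁ b₂ ?_ ?_ ?_ ?_ ?_ ?_ ?_ ?_ ?_
  · simp only [hε, deck]
    push_cast
    linear_combination w₄ - w₅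
  · intro i j _ r hr
    rw [re_lt (xγ i _ m2) (xγ j r (mp hr)) (hcB _ _ m2) (hcB _ _ (mp hr))]
    exact hbot i j r hr
  · intro i j _ r hr
    rw [re_lt (xγ j r (mn hr)) (xγ i _ m1) (hcB _ _ (mn hr)) (hcB _ _ m1)]
    linarith [htop i j r hr]
  · intro i t ht
    rw [re_lt (xγ i _ m2) (expε t ht) (hcB _ _ m2) (eB t ht)]
    exact hebot i t ht
  · intro i t ht
    rw [re_lt (expε t ht) (xγ i _ m1) (eB t ht) (hcB _ _ m1)]
    linarith [hetop i t ht]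
  · intro i j hij r hr s hs n hEq
    refine hne i j hij r hr s hs (φinj _ _ (hcB _ _ (mn hr)) (hcB _ _ (mp hs)) ?_)
    rw [← xγ i r (mn hr), ← xγ j s (mp hs), hEq, exp_deck]
  · intro t ht r hr
    exact avoid 0 t ⟨by linarith [ht.1], by linarith [ht.2]⟩ r hr (he0 t ht r hr)
  · intro t ht r hr
    exact avoid 1 t ⟨by linarith [ht.1], by linarith [ht.2]⟩ r hr (he1 t ht r hr)
  · intro t ht r hr
    exact avoid 2 t ⟨by linarith [ht.1], by linarith [ht.2]⟩ r hr (he2 t ht r hr)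

/-- A path ending at `A` can be cut before it first reaches `A`, at a point where the ratio
`‖z - A‖ / ‖z - B‖` is smaller than anywhere on the compact set `Y`. -/
theorem exists_truncation {A B : ℂ} (hAB : A ≠ B) {Y : Set ℂ} (hY : IsCompact Y) (hAY : A ∉ Y)
    {p : ℝ → ℂ} (hp : ContinuousOn p (Icc 0 1)) (hp0 : p 0 ≠ A) (hp1 : p 1 = A) :
    ∃ s ∈ Icc (0 : ℝ) 1, (∀ u ∈ Icc 0 s, p u ≠ A) ∧
      ∀ y ∈ Y, y ≠ B → ‖p s - A‖ * ‖y - B‖ < ‖y - A‖ * ‖p s - B‖ := by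
  obtain ⟨m, hm, hmY⟩ : ∃ m > 0, ∀ y ∈ Y, m * ‖y - B‖ ≤ ‖y - A‖ := by
    obtain ⟨δ, hδ, hδY⟩ : ∃ δ > 0, ∀ y ∈ Y, δ ≤ ‖y - A‖ := by
      rcases Y.eq_empty_or_nonempty with rfl | hne
      · exact ⟨1, one_pos, by simp⟩
      obtain ⟨y, hy, hmin⟩ := hY.exists_isMinOn hne
        (f := fun y => ‖y - A‖) (by fun_prop)
      exact ⟨‖y - A‖, norm_pos_iff.2 (sub_ne_zero.2 fun h => hAY (h ▸ hy)), fun z hz => hmin hz⟩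
    obtain ⟨M, hM⟩ := hY.exists_bound_of_continuousOn (f := fun y => y - B) (by fun_prop)
    have hM' : 0 < max M 1 := lt_max_of_lt_right one_pos
    refine ⟨δ / max M 1, by positivity, fun y hy => ?_⟩
    rw [div_mul_eq_mul_div, div_le_iff₀ hM']
    exact mul_le_mul (hδY y hy) ((hM y hy).trans (le_max_left _ _)) (norm_nonneg _) (norm_nonneg _)
  -- the first time at which the path reaches `A`
  obtain ⟨s₀, ⟨hs₀, hps₀⟩, hleast⟩ : ∃ s₀, IsLeast (Icc (0 : ℝ) 1 ∩ p ⁻¹' {A}) s₀ := by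
    refine (isCompact_Icc.of_isClosed_subset
      (hp.preimage_isClosed_of_isClosed isClosed_Icc isClosed_singleton)
      inter_subset_left).exists_isLeast ⟨1, by norm_num, hp1⟩
  have hpos : 0 < s₀ := lt_of_le_of_ne hs₀.1 fun h => hp0 (by rw [h]; exact hps₀)
  have hf : ContinuousOn (fun s => m * ‖p s - B‖ - ‖p s - A‖) (Icc 0 1) := by fun_prop
  have hf0 : 0 < m * ‖p s₀ - B‖ - ‖p s₀ - A‖ := by
    rw [show p s₀ = A from hps₀, sub_self, norm_zero, sub_zero]
    exact mul_pos hm (norm_pos_iff.2 (sub_ne_zero.2 hAB))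
  obtain ⟨δ, hδ, hδf⟩ := Metric.continuousOn_iff.1 hf s₀ hs₀ _ hf0
  have hsm : max 0 (s₀ - δ / 2) ∈ Icc (0 : ℝ) 1 :=
    ⟨le_max_left _ _, max_le zero_le_one (by linarith [hs₀.2])⟩
  have hlt : max 0 (s₀ - δ / 2) < s₀ := max_lt hpos (by linarith)
  refine ⟨max 0 (s₀ - δ / 2), hsm, fun u hu h => ?_, fun y hy hyB => ?_⟩
  · exact absurd (hleast ⟨⟨hu.1, hu.2.trans hsm.2⟩, h⟩) (not_le.2 (hu.2.trans_lt hlt))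
  · have h1 := hδf _ hsm (by
      rw [Real.dist_eq, abs_sub_comm, abs_of_pos (by linarith)]
      linarith [le_max_right 0 (s₀ - δ / 2)])
    rw [Real.dist_eq] at h1
    have h2 : ‖p (max 0 (s₀ - δ / 2)) - A‖ < m * ‖p (max 0 (s₀ - δ / 2)) - B‖ := by
      linarith [(abs_lt.1 h1).1]
    have h3 := hmY y hy
    have h4 := norm_pos_iff.2 (sub_ne_zero.2 hyB)
    calc _ < m * ‖p (max 0 (s₀ - δ / 2)) - B‖ * ‖y - B‖ := mul_lt_mul_of_pos_right h2 h4
      _ = m * ‖y - B‖ * ‖p (max 0 (s₀ - δ / 2)) - B‖ := by ring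
      _ ≤ _ := mul_le_mul_of_nonneg_right h3 (norm_nonneg _)

/-! ### The almost embedding -/

/-- The `i`-th vertex of the triangle as a vertex of the graph. -/
def tv (i : Fin 3) : Fin 5 := Fin.castLE (by norm_num) i

/-- The path on `[-1, 1]` along the two edges leaving the triangle at vertex `i`: negative
parameters run along the edge to `vert 3` up to the fraction `s i`, positive ones along the edge to
`vert 4` up to the fraction `t i`. -/
def legPoint (s t : Fin 3 → ℝ) (i : Fin 3) (r : ℝ) : Fin 5 → ℝ :=
  vert (tv i) + (max (-r) 0 * s i) • (vert 3 - vert (tv i)) +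
    (max r 0 * t i) • (vert 4 - vert (tv i))

theorem add_smul_mem_seg {i j : Fin 5} {u : ℝ} (hu : u ∈ Icc (0 : ℝ) 1) :
    vert i + u • (vert j - vert i) ∈ seg i j := by
  rw [seg, segment_eq_image']
  exact ⟨u, hu, rfl⟩

theorem isEdge_of_ne {i j : Fin 5} (hi3 : i ≠ 3) (hi4 : i ≠ 4) (hij : i ≠ j) : IsEdge i j := by
  refine ⟨hij, fun h => ?_⟩
  have : i ∈ ({3, 4} : Set (Fin 5)) := by rw [← h]; simp
  simp [hi3, hi4] at this

/-- Disjoint edges, each with first endpoint in the triangle, have disjoint images. The condition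
`h` lists the inequalities between endpoints needed for this. -/
theorem AlmostEmb.ne {g : (Fin 5 → ℝ) → ℂ} (hg : AlmostEmb g) {i k : Fin 3} {j l : Fin 5}
    {x y : Fin 5 → ℝ} (hx : x ∈ seg (tv i) j) (hy : y ∈ seg (tv k) l)
    (h : tv i ≠ j ∧ tv k ≠ l ∧ i ≠ k ∧ tv i ≠ l ∧ j ≠ tv k ∧ j ≠ l) : g x ≠ g y := by
  have h3 : ∀ i : Fin 3, tv i ≠ 3 := by decide
  have h4 : ∀ i : Fin 3, tv i ≠ 4 := by decide
  have hinj : ∀ i k : Fin 3, i ≠ k → tv i ≠ tv k := by decide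
  obtain ⟨h1, h2, h5, h6, h7, h8⟩ := h
  refine (hg.2 _ _ _ _ (isEdge_of_ne (h3 i) (h4 i) h1) (isEdge_of_ne (h3 k) (h4 k) h2) ?_
    ).ne_of_mem (mem_image_of_mem g hx) (mem_image_of_mem g hy)
  ext z
  simp only [mem_inter_iff, mem_insert_iff, mem_singleton_iff, mem_empty_iff_false, iff_false]
  rintro ⟨rfl | rfl, h | h⟩
  exacts [hinj _ _ h5 h, h6 h, h7 h, h8 h]

theorem AlmostEmb.continuousOn_seg {g : (Fin 5 → ℝ) → ℂ} (hg : AlmostEmb g) (i : Fin 3)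
    {j : Fin 5} (hij : tv i ≠ j) : ContinuousOn g (seg (tv i) j) := by
  have h3 : ∀ i : Fin 3, tv i ≠ 3 := by decide
  have h4 : ∀ i : Fin 3, tv i ≠ 4 := by decide
  refine hg.1.mono fun x hx => ?_
  simp only [K5m45, mem_iUnion]
  exact ⟨tv i, j, isEdge_of_ne (h3 i) (h4 i) hij, hx⟩

theorem isCompact_seg (i j : Fin 5) : IsCompact (seg i j) := by
  rw [seg, segment_eq_image']
  exact isCompact_Icc.image (by fun_prop)

/-- Cutting points on the three edges to `a`, where `a`, `b` are the two vertices off the triangle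
in either order. They lie closer to `g (vert a)`, in terms of the ratio of the distances to
`g (vert a)` and `g (vert b)`, than the whole triangle and all edges to `b`. -/
theorem AlmostEmb.exists_legs {g : (Fin 5 → ℝ) → ℂ} (hg : AlmostEmb g) {a b : Fin 5}
    (hab : a = 3 ∧ b = 4 ∨ a = 4 ∧ b = 3) : ∃ s : Fin 3 → ℝ, ∀ i, s i ∈ Icc (0 : ℝ) 1 ∧
      (∀ u ∈ Icc 0 (s i), g (vert (tv i) + u • (vert a - vert (tv i))) ≠ g (vert a)) ∧
      ∀ y, ((∃ j, y ∈ seg (tv j) b) ∨ ∃ j, y ∈ seg (tv j) (tv (j + 1))) → g y ≠ g (vert b) →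
        ‖g (vert (tv i) + s i • (vert a - vert (tv i))) - g (vert a)‖ * ‖g y - g (vert b)‖ <
          ‖g y - g (vert a)‖ * ‖g (vert (tv i) + s i • (vert a - vert (tv i))) - g (vert b)‖ := by
  have d3 : ∀ i : Fin 3, tv i ≠ 3 := by decide
  have d4 : ∀ i : Fin 3, tv i ≠ 4 := by decide
  have dinj : ∀ i k : Fin 3, i ≠ k → tv i ≠ tv k := by decide
  have dth : ∀ i j : Fin 3, ∃ k, k ≠ i ∧ k ≠ j := by decide
  have ds : ∀ i : Fin 3, i ≠ i + 1 := by decide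
  have ha : ∀ i, tv i ≠ a := by rcases hab with ⟨rfl, rfl⟩ | ⟨rfl, rfl⟩ <;> assumption
  have hb : ∀ i, tv i ≠ b := by rcases hab with ⟨rfl, rfl⟩ | ⟨rfl, rfl⟩ <;> assumption
  have nab : a ≠ b := by rcases hab with ⟨rfl, rfl⟩ | ⟨rfl, rfl⟩ <;> decide
  have endR : ∀ i j, vert j ∈ seg i j := fun i j => right_mem_segment _ _ _
  have endL : ∀ i j, vert i ∈ seg i j := fun i j => left_mem_segment _ _ _
  set W : Set (Fin 5 → ℝ) := (⋃ j, seg (tv j) b) ∪ ⋃ j, seg (tv j) (tv (j + 1)) with hW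
  have cW : IsCompact (g '' W) := by
    rw [hW, image_union, image_iUnion, image_iUnion]
    refine (isCompact_iUnion fun j => ?_).union (isCompact_iUnion fun j => ?_)
    · exact (isCompact_seg _ _).image_of_continuousOn (hg.continuousOn_seg j (hb j))
    · exact (isCompact_seg _ _).image_of_continuousOn
        (hg.continuousOn_seg j (dinj _ _ (ds j)))
  have naW : g (vert a) ∉ g '' W := by
    rintro ⟨y, hy | hy, h⟩ <;> obtain ⟨j, hj⟩ := mem_iUnion.1 hy <;>
      obtain ⟨k, k1, k2⟩ := dth j (j + 1)
    · exact hg.ne hj (endR (tv k) a) ⟨hb j, ha k, k1.symm, ha j, (hb k).symm, nab.symm⟩ h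
    · exact hg.ne hj (endR (tv k) a)
        ⟨dinj _ _ (ds j), ha k, k1.symm, ha j, (dinj _ _ k2).symm, ha _⟩ h
  have nbase : ∀ i, g (vert (tv i)) ≠ g (vert a) := fun i h =>
    naW ⟨vert (tv i), Or.inl (mem_iUnion.2 ⟨i, endL _ _⟩), h⟩
  have nAB : g (vert a) ≠ g (vert b) := fun h =>
    naW ⟨vert b, Or.inl (mem_iUnion.2 ⟨0, endR _ _⟩), h.symm⟩
  have leg : ∀ i, ∃ s ∈ Icc (0 : ℝ) 1, (∀ u ∈ Icc 0 s,
      g (vert (tv i) + u • (vert a - vert (tv i))) ≠ g (vert a)) ∧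
      ∀ y ∈ g '' W, y ≠ g (vert b) →
        ‖g (vert (tv i) + s • (vert a - vert (tv i))) - g (vert a)‖ * ‖y - g (vert b)‖ <
          ‖y - g (vert a)‖ * ‖g (vert (tv i) + s • (vert a - vert (tv i))) - g (vert b)‖ := by
    intro i
    refine exists_truncation (p := fun u => g (vert (tv i) + u • (vert a - vert (tv i))))
      nAB cW naW ?_ ?_ ?_
    · exact (hg.continuousOn_seg i (ha i)).comp (by fun_prop) fun u hu => add_smul_mem_seg hu
    · simpa using nbase i
    · simp
  choose s hs h1 h2 using leg
  refine ⟨s, fun i => ⟨hs i, h1 i, fun y hy => h2 i (g y) ⟨y, ?_, rfl⟩⟩⟩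
  rcases hy with hy | hy
  · exact Or.inl (mem_iUnion.2 hy)
  · exact Or.inr (mem_iUnion.2 hy)

theorem triLoop_mem {t : ℝ} :
    (t ∈ Icc (0 : ℝ) (1 / 3) → triLoop t ∈ seg (tv 0) (tv 1)) ∧
    (t ∈ Icc (1 / 3 : ℝ) (2 / 3) → triLoop t ∈ seg (tv 1) (tv 2)) ∧
    (t ∈ Icc (2 / 3 : ℝ) 1 → triLoop t ∈ seg (tv 2) (tv 0)) := by
  refine ⟨fun h => ?_, fun h => ?_, fun h => ?_⟩
  · rw [triLoop, if_pos h.2]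
    exact ⟨1 - 3 * t, 3 * t, by linarith [h.2], by linarith [h.1], by ring, rfl⟩
  · rcases h.1.eq_or_lt with rfl | h'
    · rw [triLoop, if_pos le_rfl]
      exact ⟨1, 0, by norm_num, by norm_num, by norm_num, by norm_num; rfl⟩
    · rw [triLoop, if_neg (not_le.2 h'), if_pos h.2]
      exact ⟨2 - 3 * t, 3 * t - 1, by linarith [h.2], by linarith [h.1], by ring, rfl⟩
  · rcases h.1.eq_or_lt with rfl | h'
    · rw [triLoop, if_neg (by norm_num), if_pos le_rfl]
      exact ⟨1, 0, by norm_num, by norm_num, by norm_num, by norm_num; rfl⟩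
    · rw [triLoop, if_neg (by linarith), if_neg (not_le.2 h')]
      exact ⟨3 - 3 * t, 3 * t - 2, by linarith [h.2], by linarith [h.1], by ring, rfl⟩

theorem legPoint_of_nonpos {s t : Fin 3 → ℝ} {i : Fin 3} {r : ℝ} (hr : r ≤ 0) :
    legPoint s t i r = vert (tv i) + (-r * s i) • (vert 3 - vert (tv i)) := by
  simp [legPoint, max_eq_left (neg_nonneg.2 hr), max_eq_right hr]

theorem legPoint_of_nonneg {s t : Fin 3 → ℝ} {i : Fin 3} {r : ℝ} (hr : 0 ≤ r) :
    legPoint s t i r = vert (tv i) + (r * t i) • (vert 4 - vert (tv i)) := by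
  simp [legPoint, max_eq_left hr, max_eq_right (neg_nonpos.2 hr)]


/-- For any piecewise linear almost embedding `g : K₅ − (4,5) → ℝ²` one has
`l(g) = w(g|K₃, g4) − w(g|K₃, g5) = ±1`. -/
theorem winding_difference_eq_pm_one_of_PL (g : (Fin 5 → ℝ) → ℂ)
    (hg : AlmostEmb g) (hPL : IsPL g)
    (n4 n5 : ℤ)
    (h4 : IsWindingNumber (fun t => g (triLoop t)) (g (vert 3)) n4)
    (h5 : IsWindingNumber (fun t => g (triLoop t)) (g (vert 4)) n5) :
    n4 - n5 = 1 ∨ n4 - n5 = -1 := by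
  have d3 : ∀ i : Fin 3, tv i ≠ 3 := by decide
  have d4 : ∀ i : Fin 3, tv i ≠ 4 := by decide
  have dinj : ∀ i k : Fin 3, i ≠ k → tv i ≠ tv k := by decide
  have ds : ∀ i : Fin 3, i ≠ i + 1 := by decide
  obtain ⟨s, hs⟩ := hg.exists_legs (a := 3) (b := 4) (by simp)
  obtain ⟨t, ht⟩ := hg.exists_legs (a := 4) (b := 3) (by simp)
  have us : ∀ i, ∀ r ∈ Icc (-1 : ℝ) 0, -r * s i ∈ Icc 0 (s i) := fun i r hr =>
    ⟨mul_nonneg (by linarith [hr.2]) (hs i).1.1,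
      mul_le_of_le_one_left (hs i).1.1 (by linarith [hr.1])⟩
  have ut : ∀ i, ∀ r ∈ Icc (0 : ℝ) 1, r * t i ∈ Icc 0 (t i) := fun i r hr =>
    ⟨mul_nonneg hr.1 (ht i).1.1, mul_le_of_le_one_left (ht i).1.1 hr.2⟩
  have mem3 : ∀ i, ∀ r ∈ Icc (-1 : ℝ) 0, legPoint s t i r ∈ seg (tv i) 3 := by
    intro i r hr
    rw [legPoint_of_nonpos hr.2]
    exact add_smul_mem_seg ⟨(us i r hr).1, (us i r hr).2.trans (hs i).1.2⟩
  have mem4 : ∀ i, ∀ r ∈ Icc (0 : ℝ) 1, legPoint s t i r ∈ seg (tv i) 4 := by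
    intro i r hr
    rw [legPoint_of_nonneg hr.1]
    exact add_smul_mem_seg ⟨(ut i r hr).1, (ut i r hr).2.trans (ht i).1.2⟩
  have mcases : ∀ {r : ℝ}, r ∈ Icc (-1 : ℝ) 1 → r ∈ Icc (-1 : ℝ) 0 ∨ r ∈ Icc (0 : ℝ) 1 := by
    intro r hr
    rcases le_total r 0 with h | h
    exacts [Or.inl ⟨hr.1, h⟩, Or.inr ⟨h, hr.2⟩]
  have end3 : ∀ i, vert 3 ∈ seg (tv i) 3 := fun i => right_mem_segment _ _ _
  have end4 : ∀ i, vert 4 ∈ seg (tv i) 4 := fun i => right_mem_segment _ _ _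
  have c34 : ∀ i k, i ≠ k → ∀ x ∈ seg (tv i) 3, ∀ y ∈ seg (tv k) 4, g x ≠ g y :=
    fun i k hik x hx y hy =>
      hg.ne hx hy ⟨d3 i, d4 k, hik, d4 i, (d3 k).symm, by decide⟩
  have avA : ∀ i, ∀ r ∈ Icc (-1 : ℝ) 1, g (legPoint s t i r) ≠ g (vert 3) := by
    intro i r hr
    rcases mcases hr with h | h
    · rw [legPoint_of_nonpos h.2]
      exact (hs i).2.1 _ (us i r h)
    · exact (c34 (i + 1) i (ds i).symm _ (end3 _) _ (mem4 i r h)).symm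
  have avB : ∀ i, ∀ r ∈ Icc (-1 : ℝ) 1, g (legPoint s t i r) ≠ g (vert 4) := by
    intro i r hr
    rcases mcases hr with h | h
    · exact c34 i (i + 1) (ds i) _ (mem3 i r h) _ (end4 _)
    · rw [legPoint_of_nonneg h.1]
      exact (ht i).2.1 _ (ut i r h)
  have tri : ∀ u ∈ Icc (0 : ℝ) 1, ∃ j, triLoop u ∈ seg (tv j) (tv (j + 1)) := by
    intro u hu
    rcases le_total u (1 / 3) with h | h
    · exact ⟨0, triLoop_mem.1 ⟨hu.1, h⟩⟩
    rcases le_total u (2 / 3) with h' | h'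
    · exact ⟨1, triLoop_mem.2.1 ⟨h, h'⟩⟩
    · exact ⟨2, triLoop_mem.2.2 ⟨h', hu.2⟩⟩
  -- an edge of the triangle misses both legs at the opposite vertex
  have opp : ∀ i j k : Fin 3, i ≠ j → k ≠ i → k ≠ j → ∀ x ∈ seg (tv i) (tv j),
      ∀ r ∈ Icc (-1 : ℝ) 1, g x ≠ g (legPoint s t k r) := by
    intro i j k hij hki hkj x hx r hr
    rcases mcases hr with h | h
    · exact hg.ne hx (mem3 k r h)
        ⟨dinj _ _ hij, d3 k, hki.symm, d3 i, (dinj _ _ hkj).symm, d3 j⟩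
    · exact hg.ne hx (mem4 k r h)
        ⟨dinj _ _ hij, d4 k, hki.symm, d4 i, (dinj _ _ hkj).symm, d4 j⟩
  have z0 : ∀ i, legPoint s t i 0 = vert (tv i) := fun i => by simp [legPoint]
  have n1 : ∀ i, legPoint s t i (-1) = vert (tv i) + s i • (vert 3 - vert (tv i)) := fun i => by
    rw [legPoint_of_nonpos (by norm_num)]; norm_num
  have p1 : ∀ i, legPoint s t i 1 = vert (tv i) + t i • (vert 4 - vert (tv i)) := fun i => by
    rw [legPoint_of_nonneg (by norm_num), one_mul]
  refine planar_version (c := fun i r => g (legPoint s t i r)) ?_ h4 h5 ?_ avA avB ?_ ?_ ?_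
    ?_ ?_ ?_ ?_ ?_ ?_ ?_ ?_
  · exact c34 0 1 (by decide) _ (end3 _) _ (end4 _)
  · intro i
    refine hg.1.comp (by unfold legPoint; fun_prop) fun r hr => ?_
    simp only [K5m45, mem_iUnion]
    rcases mcases hr with h | h
    · exact ⟨tv i, 3, isEdge_of_ne (d3 i) (d4 i) (d3 i), mem3 i r h⟩
    · exact ⟨tv i, 4, isEdge_of_ne (d3 i) (d4 i) (d4 i), mem4 i r h⟩
  · simp only [z0]; congr 1; rw [triLoop, if_pos (by norm_num)]; norm_num; rfl
  · simp only [z0]; congr 1; rw [triLoop, if_pos (by norm_num)]; norm_num; rfl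
  · simp only [z0]; congr 1; rw [triLoop, if_neg (by norm_num), if_pos (by norm_num)]; norm_num; rfl
  · intro i j r hr
    simp only [n1]
    exact (hs i).2.2 _ (Or.inl ⟨j, mem4 j r hr⟩) (avB j r ⟨by linarith [hr.1], hr.2⟩)
  · intro i j r hr
    simp only [p1]
    exact (ht i).2.2 _ (Or.inl ⟨j, mem3 j r hr⟩) (avA j r ⟨hr.1, by linarith [hr.2]⟩)
  · intro i u hu
    simp only [n1]
    exact (hs i).2.2 _ (Or.inr (tri u hu)) (h5.ne hu)
  · intro i u hu
    simp only [p1]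
    exact (ht i).2.2 _ (Or.inr (tri u hu)) (h4.ne hu)
  · exact fun i j hij r hr u hu => c34 i j hij _ (mem3 i r hr) _ (mem4 j u hu)
  · exact fun u hu r hr => opp 1 2 0 (by decide) (by decide) (by decide) _
      (triLoop_mem.2.1 hu) r hr
  · exact fun u hu r hr => opp 2 0 1 (by decide) (by decide) (by decide) _
      (triLoop_mem.2.2 hu) r hr
  · exact fun u hu r hr => opp 0 1 2 (by decide) (by decide) (by decide) _
      (triLoop_mem.1 hu) r hr
end
end

section
/- For any continuous almost embedding g : K5−(4,5) → ℝ² the integer l(g) := w(g|_{K3}, g(4)) − w(g|_{K3}, g(5)) is odd. -/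
/-!
For vertices `i`, `k`, `l` with `kl` an edge, let `θ(i; kl)` be the increment of a continuous
logarithm of `g y - g i` as `y` runs along `kl`; `g i` is not on `g(kl)` because `i` lies on an
edge disjoint from `kl` (`AlmostEmb.vert_ne`).

* For disjoint edges `ij` and `kl`, the function `g y - g x` has a continuous logarithm on
  the square `ij × kl`, so `θ(i; kl) - θ(j; kl) = θ(k; ij) - θ(l; ij)` (`square_relation`).
* Choose logarithms `L i j = L j i` of `±(g j - g i)`, the sign being that of `j - i`. Then
  `θ(i; kl) = L i l - L i k + πi c(i; kl)` with `c(i; kl)` an integer whose parity is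
  `[l < i] + [k < i]` (`exists_sym_log`).
* By symmetry of `L`, the terms in `L` cancel from the square relations, and around the triangle they
  cancel too. So the integers `c` satisfy the square relations, and their sums over the triangle
  are twice the winding numbers (`winding_eq`).

The oddness of the difference is now a consequence of these linear relations and parities
(`odd_of_squares`). Geometrically, the quotient of the deleted product of the graph by the swap of
factors is a non-orientable surface with boundary, and the argument evaluates the degree of its map
to `ℝP¹` on a cycle dual to the first Stiefel-Whitney class.
-/

open Set

noncomputable section

/-! ### Increments of logarithms along paths -/

/-- `θ` is the increment over `[0, 1]` of a continuous logarithm of `f`. -/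
def Inc (f : ℝ → ℂ) (θ : ℂ) : Prop :=
  ∃ h : ℝ → ℂ, ContinuousOn h (Icc 0 1) ∧ (∀ t ∈ Icc (0:ℝ) 1, Complex.exp (h t) = f t) ∧
    h 1 - h 0 = θ

/-- Two continuous logarithms of proportional functions differ by a constant, because `exp` is a
covering map. -/
lemma Inc.eq_of_smul {f f' : ℝ → ℂ} {θ θ' a : ℂ} (H : Inc f θ) (H' : Inc f' θ')
    (hff : ∀ t ∈ Icc (0:ℝ) 1, f' t = a * f t) : θ' = θ := by
  obtain ⟨h, hc, he, rfl⟩ := H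
  obtain ⟨h', hc', he', rfl⟩ := H'
  have hexp : ∀ t ∈ Icc (0:ℝ) 1, Complex.exp (h' t - h t) = a := fun t ht => by
    rw [Complex.exp_sub, he t ht, he' t ht, hff t ht, mul_div_assoc, div_self, mul_one]
    rw [← he t ht]
    exact Complex.exp_ne_zero _
  have := Complex.isCoveringMap_exp.constOn_of_comp (g := fun t => h' t - h t)
    (isPreconnected_Icc (a := (0:ℝ)) (b := 1)) (hc'.sub hc)
    (fun s hs t ht => Subtype.ext ((hexp s hs).trans (hexp t ht).symm))
    (right_mem_Icc.2 zero_le_one) (left_mem_Icc.2 zero_le_one)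
  linear_combination this

/-- The endpoints of a path determine the increment modulo `2πi`. -/
lemma Inc.exp_mul {f : ℝ → ℂ} {θ : ℂ} (H : Inc f θ) : Complex.exp θ * f 0 = f 1 := by
  obtain ⟨h, -, he, rfl⟩ := H
  rw [← he 0 (left_mem_Icc.2 zero_le_one), ← he 1 (right_mem_Icc.2 zero_le_one),
    ← Complex.exp_add]
  congr 1
  ring

/-- The difference of two disjoint paths has a continuous logarithm on the unit square; the square
is extended to the plane by clamping, so that the lifting theorem for coverings applies to the
simply connected space `ℝ × ℝ`. -/
lemma exists_log_sub {P Q : ℝ → ℂ} (hP : ContinuousOn P (Icc 0 1)) (hQ : ContinuousOn Q (Icc 0 1))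
    (hPQ : ∀ s ∈ Icc (0:ℝ) 1, ∀ t ∈ Icc (0:ℝ) 1, P s ≠ Q t) :
    ∃ F : ℝ × ℝ → ℂ, Continuous F ∧
      ∀ s ∈ Icc (0:ℝ) 1, ∀ t ∈ Icc (0:ℝ) 1, Complex.exp (F (s, t)) = Q t - P s := by
  let c : ℝ → ℝ := fun t => projIcc 0 1 zero_le_one t
  have hc : Continuous c := continuous_subtype_val.comp continuous_projIcc
  have hm : ∀ t, c t ∈ Icc (0:ℝ) 1 := fun t => (projIcc 0 1 zero_le_one t).2
  have he : ∀ t ∈ Icc (0:ℝ) 1, c t = t := fun t ht => by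
    simp only [c, projIcc_of_mem zero_le_one ht]
  have hP' : Continuous fun t => P (c t) := hP.comp_continuous hc hm
  have hQ' : Continuous fun t => Q (c t) := hQ.comp_continuous hc hm
  let G : C(ℝ × ℝ, {z : ℂ // z ≠ 0}) :=
    ⟨fun x => ⟨Q (c x.2) - P (c x.1), sub_ne_zero.2 (hPQ _ (hm _) _ (hm _)).symm⟩,
      ((hQ'.comp continuous_snd).sub (hP'.comp continuous_fst)).subtype_mk _⟩
  obtain ⟨F, ⟨-, hF⟩, -⟩ := Complex.isCoveringMap_exp.existsUnique_continuousMap_lifts G 0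
    (Complex.log (G 0)) (Subtype.ext (Complex.exp_log (G 0).2))
  refine ⟨F, F.continuous, fun s hs t ht => ?_⟩
  have := congrArg Subtype.val (congrFun hF (s, t))
  simpa [G, he s hs, he t ht] using this

/-- The boundary relation of the square: for disjoint paths `P` and `Q`, the increments of
`log (Q t - P s)` along the four sides of the unit square add up to zero. -/
lemma square_relation {P Q : ℝ → ℂ} (hP : ContinuousOn P (Icc 0 1))
    (hQ : ContinuousOn Q (Icc 0 1))
    (hPQ : ∀ s ∈ Icc (0:ℝ) 1, ∀ t ∈ Icc (0:ℝ) 1, P s ≠ Q t) {a b c d : ℂ}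
    (ha : Inc (fun t => Q t - P 0) a) (hb : Inc (fun t => Q t - P 1) b)
    (hc : Inc (fun s => P s - Q 0) c) (hd : Inc (fun s => P s - Q 1) d) :
    a - b = c - d := by
  obtain ⟨F, hF, hexp⟩ := exists_log_sub hP hQ hPQ
  have h0 : (0:ℝ) ∈ Icc (0:ℝ) 1 := left_mem_Icc.2 zero_le_one
  have h1 : (1:ℝ) ∈ Icc (0:ℝ) 1 := right_mem_Icc.2 zero_le_one
  have ea := ha.eq_of_smul (a := 1) (f' := fun t => Q t - P 0)
    ⟨fun t => F (0, t), by fun_prop, fun t ht => hexp 0 h0 t ht, rfl⟩ (fun t _ => by ring)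
  have eb := hb.eq_of_smul (a := 1) (f' := fun t => Q t - P 1)
    ⟨fun t => F (1, t), by fun_prop, fun t ht => hexp 1 h1 t ht, rfl⟩ (fun t _ => by ring)
  have ec := hc.eq_of_smul (a := -1) (f' := fun s => Q 0 - P s)
    ⟨fun s => F (s, 0), by fun_prop, fun s hs => hexp s hs 0 h0, rfl⟩ (fun t _ => by ring)
  have ed := hd.eq_of_smul (a := -1) (f' := fun s => Q 1 - P s)
    ⟨fun s => F (s, 1), by fun_prop, fun s hs => hexp s hs 1 h1, rfl⟩ (fun t _ => by ring)
  linear_combination -ea + eb + ec - ed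

lemma exists_inc {Q : ℝ → ℂ} {A : ℂ} (hQ : ContinuousOn Q (Icc 0 1))
    (hA : ∀ t ∈ Icc (0:ℝ) 1, A ≠ Q t) : ∃ θ, Inc (fun t => Q t - A) θ := by
  obtain ⟨F, hF, hexp⟩ := exists_log_sub (P := fun _ => A) continuousOn_const hQ
    (fun _ _ => hA)
  exact ⟨_, fun t => F (0, t), by fun_prop,
    fun t ht => hexp 0 (left_mem_Icc.2 zero_le_one) t ht, rfl⟩

/-! ### Edge paths of an almost embedding -/

/-- The path `g` traces along the edge from vertex `k` to vertex `l`. -/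
def edgePath (g : (Fin 5 → ℝ) → ℂ) (k l : Fin 5) (t : ℝ) : ℂ :=
  g ((1 - t) • vert k + t • vert l)

@[simp] lemma edgePath_zero (g : (Fin 5 → ℝ) → ℂ) (k l : Fin 5) :
    edgePath g k l 0 = g (vert k) := by simp [edgePath]

@[simp] lemma edgePath_one (g : (Fin 5 → ℝ) → ℂ) (k l : Fin 5) :
    edgePath g k l 1 = g (vert l) := by simp [edgePath]

lemma mem_seg (k l : Fin 5) {t : ℝ} (ht : t ∈ Icc (0:ℝ) 1) :
    (1 - t) • vert k + t • vert l ∈ seg k l :=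
  ⟨1 - t, t, by linarith [ht.2], ht.1, by ring, rfl⟩

lemma isEdge_iff (i j : Fin 5) :
    IsEdge i j ↔ i ≠ j ∧ ¬ (i = 3 ∧ j = 4 ∨ i = 4 ∧ j = 3) := by
  rw [IsEdge, Ne, Ne, Set.pair_eq_pair_iff]

lemma AlmostEmb.continuousOn_edgePath {g : (Fin 5 → ℝ) → ℂ} (hg : AlmostEmb g) {k l : Fin 5}
    (hkl : IsEdge k l) : ContinuousOn (edgePath g k l) (Icc 0 1) := by
  refine hg.1.comp (f := fun t : ℝ => (1 - t) • vert k + t • vert l) (by fun_prop) fun t ht => ?_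
  exact mem_iUnion.2 ⟨k, mem_iUnion.2 ⟨l, mem_iUnion.2 ⟨hkl, mem_seg k l ht⟩⟩⟩

lemma AlmostEmb.edgePath_ne {g : (Fin 5 → ℝ) → ℂ} (hg : AlmostEmb g) {i j k l : Fin 5}
    (hij : IsEdge i j) (hkl : IsEdge k l) (hik : i ≠ k) (hil : i ≠ l) (hjk : j ≠ k) (hjl : j ≠ l)
    {s t : ℝ} (hs : s ∈ Icc (0:ℝ) 1) (ht : t ∈ Icc (0:ℝ) 1) :
    edgePath g i j s ≠ edgePath g k l t := by
  have hd : ({i, j} : Set (Fin 5)) ∩ {k, l} = ∅ := by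
    ext x
    simp only [mem_inter_iff, mem_insert_iff, mem_singleton_iff, mem_empty_iff_false, iff_false]
    rintro ⟨rfl | rfl, h⟩ <;> tauto
  exact Set.disjoint_iff_forall_ne.1 (hg.2 i j k l hij hkl hd)
    (mem_image_of_mem g (mem_seg i j hs)) (mem_image_of_mem g (mem_seg k l ht))

lemma AlmostEmb.vert_ne {g : (Fin 5 → ℝ) → ℂ} (hg : AlmostEmb g) {i k l : Fin 5}
    (hkl : IsEdge k l) (hik : i ≠ k) (hil : i ≠ l) {t : ℝ} (ht : t ∈ Icc (0:ℝ) 1) :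
    g (vert i) ≠ edgePath g k l t := by
  -- Two vertices lie off `i`, `k`, `l`, and at most one of them is not joined to `i`.
  obtain ⟨m, him, hmk, hml⟩ : ∃ m, IsEdge i m ∧ m ≠ k ∧ m ≠ l := by
    simp only [isEdge_iff] at hkl ⊢
    revert i k l
    decide
  simpa using hg.edgePath_ne him hkl hik hil hmk hml (left_mem_Icc.2 zero_le_one) ht

/-- The distinct vertices of the graph have distinct images, including the two not joined by
an edge. -/
lemma AlmostEmb.vert_injective {g : (Fin 5 → ℝ) → ℂ} (hg : AlmostEmb g) {i k : Fin 5}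
    (hik : i ≠ k) : g (vert i) ≠ g (vert k) := by
  obtain ⟨l, hkl, hil⟩ : ∃ l, IsEdge k l ∧ i ≠ l := by
    simp only [isEdge_iff]
    revert i k
    decide
  simpa using hg.vert_ne hkl hik hil (left_mem_Icc.2 zero_le_one)

/-! ### Integrality and winding numbers -/

/-- With `L i j` a logarithm of `g j - g i` up to a sign making `L` symmetric, the increment along
`kl` around `i` is `L i l - L i k` plus a multiple of `πi`, whose parity depends only on the order of
the vertices `i`, `k`, `l`. -/
lemma exists_sym_log {g : (Fin 5 → ℝ) → ℂ} (hg : AlmostEmb g) :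
    ∃ L : Fin 5 → Fin 5 → ℂ, (∀ i j, L i j = L j i) ∧
      ∀ i k l θ, i ≠ k → i ≠ l → Inc (fun t => edgePath g k l t - g (vert i)) θ →
        ∃ m : ℤ, θ = L i l - L i k + Real.pi * Complex.I *
          (((if l < i then 1 else 0) - (if k < i then 1 else 0) + 2 * m : ℤ) : ℂ) := by
  have hL : ∀ i j, i ≠ j → Complex.exp (Complex.log (g (vert (max i j)) - g (vert (min i j)))) =
      Complex.exp (Real.pi * Complex.I * (if j < i then 1 else 0)) *
        (g (vert j) - g (vert i)) := by
    intro i j hij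
    rcases lt_or_gt_of_ne hij with h | h
    · rw [Complex.exp_log, max_eq_right h.le, min_eq_left h.le, if_neg h.not_gt]
      · simp
      · rw [max_eq_right h.le, min_eq_left h.le]
        exact sub_ne_zero.2 (hg.vert_injective hij.symm)
    · rw [Complex.exp_log, max_eq_left h.le, min_eq_right h.le, if_pos h]
      · simp [Complex.exp_pi_mul_I]
      · rw [max_eq_left h.le, min_eq_right h.le]
        exact sub_ne_zero.2 (hg.vert_injective hij)
  refine ⟨fun i j => Complex.log (g (vert (max i j)) - g (vert (min i j))),
    fun i j => by simp only [max_comm, min_comm], fun i k l θ hik hil hθ => ?_⟩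
  have hk := hL i k hik
  have hl := hL i l hil
  simp only
  generalize Complex.log (g (vert (max i k)) - g (vert (min i k))) = x at hk ⊢
  generalize Complex.log (g (vert (max i l)) - g (vert (min i l))) = y at hl ⊢
  have h1 := hθ.exp_mul
  simp only [edgePath_zero, edgePath_one] at h1
  have key : Complex.exp (θ + x + Real.pi * Complex.I * (if l < i then 1 else 0)) =
      Complex.exp (y + Real.pi * Complex.I * (if k < i then 1 else 0)) := by
    rw [Complex.exp_add, Complex.exp_add, Complex.exp_add, hk, hl, ← h1]
    ring
  obtain ⟨n, hn⟩ := Complex.exp_eq_exp_iff_exists_int.1 key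
  -- The difference of the two indicators appears with the opposite sign; the shift by an
  -- even number absorbs this.
  refine ⟨n + (if k < i then 1 else 0) - (if l < i then 1 else 0), ?_⟩
  push_cast
  linear_combination hn

/-- The winding number is the sum of the increments along the three sides of the triangle. -/
lemma winding_eq {g : (Fin 5 → ℝ) → ℂ} {A : ℂ} {n : ℤ}
    (hn : IsWindingNumber (fun t => g (triLoop t)) A n) {a b c : ℂ}
    (ha : Inc (fun t => edgePath g 0 1 t - A) a) (hb : Inc (fun t => edgePath g 1 2 t - A) b)
    (hc : Inc (fun t => edgePath g 2 0 t - A) c) :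
    a + b + c = 2 * (Real.pi : ℂ) * Complex.I * (n : ℂ) := by
  obtain ⟨h, hcont, hexp, hinc⟩ := hn
  have sub : ∀ r : ℝ, 0 ≤ r → r ≤ 2 → ContinuousOn (fun t : ℝ => h ((t + r) / 3)) (Icc 0 1) ∧
      ∀ t ∈ Icc (0:ℝ) 1, Complex.exp (h ((t + r) / 3)) = g (triLoop ((t + r) / 3)) - A := by
    intro r h0 h2
    have hm : ∀ t ∈ Icc (0:ℝ) 1, (t + r) / 3 ∈ Icc (0:ℝ) 1 := fun t ht =>
      ⟨by linarith [ht.1], by linarith [ht.2]⟩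
    refine ⟨hcont.comp (f := fun t : ℝ => (t + r) / 3) (by fun_prop) hm, fun t ht => ?_⟩
    linear_combination -hexp _ (hm t ht)
  have tri0 : ∀ t ∈ Icc (0:ℝ) 1, g (triLoop ((t + 0) / 3)) = edgePath g 0 1 t := fun t ht => by
    rw [triLoop, if_pos (by linarith [ht.2]), edgePath]
    congr 3 <;> ring
  -- In the next two claims `t = 0` falls in the preceding branch of `triLoop`, which agrees with
  -- the following one at the corner.
  have tri1 : ∀ t ∈ Icc (0:ℝ) 1, g (triLoop ((t + 1) / 3)) = edgePath g 1 2 t := fun t ht => by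
    rcases ht.1.eq_or_lt with rfl | h0
    · norm_num [triLoop, edgePath]
    · rw [triLoop, if_neg (by linarith), if_pos (by linarith [ht.2]), edgePath]
      congr 3 <;> ring
  have tri2 : ∀ t ∈ Icc (0:ℝ) 1, g (triLoop ((t + 2) / 3)) = edgePath g 2 0 t := fun t ht => by
    rcases ht.1.eq_or_lt with rfl | h0
    · norm_num [triLoop, edgePath]
    · rw [triLoop, if_neg (by linarith), if_neg (by linarith), edgePath]
      congr 3 <;> ring
  obtain ⟨c0, e0⟩ := sub 0 le_rfl zero_le_two
  obtain ⟨c1, e1⟩ := sub 1 zero_le_one one_le_two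
  obtain ⟨c2, e2⟩ := sub 2 zero_le_two le_rfl
  have ea := ha.eq_of_smul (a := 1) ⟨_, c0, e0, rfl⟩ fun t ht => by rw [tri0 t ht, one_mul]
  have eb := hb.eq_of_smul (a := 1) ⟨_, c1, e1, rfl⟩ fun t ht => by rw [tri1 t ht, one_mul]
  have ec := hc.eq_of_smul (a := 1) ⟨_, c2, e2, rfl⟩ fun t ht => by rw [tri2 t ht, one_mul]
  norm_num at ea eb ec
  linear_combination hinc - ea - eb - ec

/-! ### The parity argument -/

/-- For `k ≠ i` in `{0, 1, 2}` let `s(k,i)` be `1` if `i` follows `k` in the cyclic order and `-1`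
otherwise. By the squares `kl × i3` and `kl × i4`, the number `2 (n4 - n5)` is the sum of
`s(k,i) (c k i 3 - c k i 4)` over ordered pairs `(k, i)`. By the squares `k4 × i3` and the
antisymmetry of `s`, the sum of `-s(k,i) c k i 4` equals the sum of `s(k,i) c k i 3`. Hence `n4 - n5`
is a signed sum of the six numbers `c k i 3`, exactly three of which are odd. -/
lemma odd_of_squares (c : Fin 5 → Fin 5 → Fin 5 → ℤ) (n4 n5 : ℤ)
    (par : ∀ i k, i ≠ k → i < 3 → k < 3 →
      ∃ m : ℤ, c i k 3 = (if 3 < i then 1 else 0) - (if k < i then 1 else 0) + 2 * m)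
    (sq : ∀ i j k l, IsEdge i j → IsEdge k l → i ≠ k → i ≠ l → j ≠ k → j ≠ l →
      c i k l - c j k l = c k i j - c l i j)
    (h4 : c 3 0 1 + c 3 1 2 + c 3 2 0 = 2 * n4)
    (h5 : c 4 0 1 + c 4 1 2 + c 4 2 0 = 2 * n5) : Odd (n4 - n5) := by
  simp only [isEdge_iff] at sq
  have q1 := sq 0 1 2 3 (by decide) (by decide) (by decide) (by decide) (by decide) (by decide)
  have q2 := sq 0 1 2 4 (by decide) (by decide) (by decide) (by decide) (by decide) (by decide)
  have q3 := sq 1 2 0 3 (by decide) (by decide) (by decide) (by decide) (by decide) (by decide)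
  have q4 := sq 1 2 0 4 (by decide) (by decide) (by decide) (by decide) (by decide) (by decide)
  have q5 := sq 2 0 1 3 (by decide) (by decide) (by decide) (by decide) (by decide) (by decide)
  have q6 := sq 2 0 1 4 (by decide) (by decide) (by decide) (by decide) (by decide) (by decide)
  have q7 := sq 0 3 1 4 (by decide) (by decide) (by decide) (by decide) (by decide) (by decide)
  have q8 := sq 0 3 2 4 (by decide) (by decide) (by decide) (by decide) (by decide) (by decide)
  have q9 := sq 1 3 0 4 (by decide) (by decide) (by decide) (by decide) (by decide) (by decide)
  have q10 := sq 1 3 2 4 (by decide) (by decide) (by decide) (by decide) (by decide) (by decide)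
  have q11 := sq 2 3 0 4 (by decide) (by decide) (by decide) (by decide) (by decide) (by decide)
  have q12 := sq 2 3 1 4 (by decide) (by decide) (by decide) (by decide) (by decide) (by decide)
  obtain ⟨m1, e1⟩ := par 0 1 (by decide) (by decide) (by decide)
  obtain ⟨m2, e2⟩ := par 0 2 (by decide) (by decide) (by decide)
  obtain ⟨m3, e3⟩ := par 1 0 (by decide) (by decide) (by decide)
  obtain ⟨m4, e4⟩ := par 1 2 (by decide) (by decide) (by decide)
  obtain ⟨m5, e5⟩ := par 2 0 (by decide) (by decide) (by decide)
  obtain ⟨m6, e6⟩ := par 2 1 (by decide) (by decide) (by decide)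
  simp at e1 e2 e3 e4 e5 e6
  rw [Int.odd_iff]
  omega

/-- For any continuous almost embedding `g : K₅ − (4,5) → ℝ²` the integer
`l(g) = w(g|K₃, g4) − w(g|K₃, g5)` is odd. -/
theorem winding_difference_odd (g : (Fin 5 → ℝ) → ℂ) (hg : AlmostEmb g)
    (n4 n5 : ℤ)
    (h4 : IsWindingNumber (fun t => g (triLoop t)) (g (vert 3)) n4)
    (h5 : IsWindingNumber (fun t => g (triLoop t)) (g (vert 4)) n5) :
    Odd (n4 - n5) := by
  have inc : ∀ i k l, ∃ θ, IsEdge k l → i ≠ k → i ≠ l →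
      Inc (fun t => edgePath g k l t - g (vert i)) θ := fun i k l => by
    by_cases h : IsEdge k l ∧ i ≠ k ∧ i ≠ l
    · obtain ⟨θ, hθ⟩ := exists_inc (hg.continuousOn_edgePath h.1)
        (fun t ht => hg.vert_ne h.1 h.2.1 h.2.2 ht)
      exact ⟨θ, fun _ _ _ => hθ⟩
    · exact ⟨0, fun h1 h2 h3 => absurd ⟨h1, h2, h3⟩ h⟩
  choose θ hθ using inc
  obtain ⟨L, hL, hc⟩ := exists_sym_log hg
  have hc' : ∀ i k l, ∃ c : ℤ, IsEdge k l → i ≠ k → i ≠ l →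
      θ i k l = L i l - L i k + Real.pi * Complex.I * (c : ℂ) ∧
      ∃ m : ℤ, c = (if l < i then 1 else 0) - (if k < i then 1 else 0) + 2 * m := fun i k l => by
    by_cases h : IsEdge k l ∧ i ≠ k ∧ i ≠ l
    · obtain ⟨m, hm⟩ := hc i k l _ h.2.1 h.2.2 (hθ i k l h.1 h.2.1 h.2.2)
      exact ⟨_, fun _ _ _ => ⟨hm, m, rfl⟩⟩
    · exact ⟨0, fun h1 h2 h3 => absurd ⟨h1, h2, h3⟩ h⟩
  choose c hc using hc'
  have hpi : (Real.pi : ℂ) * Complex.I ≠ 0 :=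
    mul_ne_zero (Complex.ofReal_ne_zero.2 Real.pi_ne_zero) Complex.I_ne_zero
  have tri : ∀ (v : Fin 5) (n : ℤ), v ≠ 0 → v ≠ 1 → v ≠ 2 →
      IsWindingNumber (fun t => g (triLoop t)) (g (vert v)) n →
      c v 0 1 + c v 1 2 + c v 2 0 = 2 * n := by
    intro v n h0 h1 h2 hn
    have e01 : IsEdge 0 1 := by rw [isEdge_iff]; decide
    have e12 : IsEdge 1 2 := by rw [isEdge_iff]; decide
    have e20 : IsEdge 2 0 := by rw [isEdge_iff]; decide
    have key := winding_eq hn (hθ v 0 1 e01 h0 h1) (hθ v 1 2 e12 h1 h2) (hθ v 2 0 e20 h2 h0)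
    rw [(hc v 0 1 e01 h0 h1).1, (hc v 1 2 e12 h1 h2).1, (hc v 2 0 e20 h2 h0).1] at key
    have : ((c v 0 1 + c v 1 2 + c v 2 0 : ℤ) : ℂ) = ((2 * n : ℤ) : ℂ) := by
      apply mul_left_cancel₀ hpi
      push_cast
      linear_combination key
    exact_mod_cast this
  refine odd_of_squares c n4 n5 (fun i k hik hi hk => ?_)
    (fun i j k l hij hkl hik hil hjk hjl => ?_)
    (tri 3 n4 (by decide) (by decide) (by decide) h4)
    (tri 4 n5 (by decide) (by decide) (by decide) h5)
  · have hk3 : IsEdge k 3 := by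
      rw [isEdge_iff]
      clear hik
      revert k
      decide
    exact (hc i k 3 hk3 hik hi.ne).2
  · have key := square_relation (hg.continuousOn_edgePath hij) (hg.continuousOn_edgePath hkl)
      (fun s hs t ht => hg.edgePath_ne hij hkl hik hil hjk hjl hs ht)
      (a := θ i k l) (b := θ j k l) (c := θ k i j) (d := θ l i j)
      (by simpa using hθ i k l hkl hik hil) (by simpa using hθ j k l hkl hjk hjl)
      (by simpa using hθ k i j hij hik.symm hjk.symm)
      (by simpa using hθ l i j hij hil.symm hjl.symm)
    rw [(hc i k l hkl hik hil).1, (hc j k l hkl hjk hjl).1, (hc k i j hij hik.symm hjk.symm).1,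
      (hc l i j hij hil.symm hjl.symm).1, hL k j, hL k i, hL l j, hL l i] at key
    have : ((c i k l - c j k l : ℤ) : ℂ) = ((c k i j - c l i j : ℤ) : ℂ) := by
      apply mul_left_cancel₀ hpi
      push_cast
      linear_combination key
    exact_mod_cast this
end
end
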